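/- arXiv:2401.00760 — 7 statements merged into one kernel-verified Lean document; each statement's English description precedes it below -/
import Mathlib

section
/- Suppose g ∈ k[x,y] is reducible over k. Then g factors as g = H1·H2 where either (A) H1 = y² + (a1x² + a2x + a3) and H2 = y² + (−4x⁴ + a4x³ + a5x² + a6x + a7) for some a1,…,a7 ∈ k, or (B) H1 = y² + (2x² + a1x + a2)y + (a3x³ + a4x² + a5x + a6) and H2 = y² + (−2x² − a1x − a2)y + (a3x³ + a4x² + a5x + a6) for some a1,…,a6 ∈ k. -/
open MvPolynomial

lemma aux_A {k : Type*} [Field k] (h4 : (-4 : k) ≠ 0) (P Q u v : Polynomial k)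
    (hP : P.natDegree ≤ 4) (hP4 : P.coeff 4 = -4) (hQ : Q ≠ 0) (hQ6 : Q.natDegree ≤ 6)
    (h1 : u + v = P) (h2 : u * v = Q) (hle : u.natDegree ≤ v.natDegree) :
    u.natDegree < 3 ∧ v.natDegree < 5 ∧ v.coeff 4 = -4 := by
  have hu : u ≠ 0 := by rintro rfl; exact hQ (by rw [← h2, zero_mul])
  have hv : v ≠ 0 := by rintro rfl; exact hQ (by rw [← h2, mul_zero])
  have hd : u.natDegree + v.natDegree ≤ 6 := by
    rw [← Polynomial.natDegree_mul hu hv, h2]; exact hQ6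
  have hu4 : u.coeff 4 = 0 := Polynomial.coeff_eq_zero_of_natDegree_lt (by omega)
  have hv4 : v.coeff 4 = -4 := by rw [← hP4, ← h1, Polynomial.coeff_add, hu4, zero_add]
  have hv4' : 4 ≤ v.natDegree := Polynomial.le_natDegree_of_ne_zero (by rw [hv4]; exact h4)
  have : P.natDegree = v.natDegree := by
    rw [← h1]; exact Polynomial.natDegree_add_eq_right_of_natDegree_lt (by omega)
  exact ⟨by omega, by omega, hv4⟩

lemma aux_exp3 {k : Type*} [Field k] (u : Polynomial k) (h : u.natDegree < 3) :
    u = Polynomial.C (u.coeff 2) * Polynomial.X ^ 2 + Polynomial.C (u.coeff 1) * Polynomial.X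
      + Polynomial.C (u.coeff 0) := by
  conv_lhs => rw [Polynomial.as_sum_range_C_mul_X_pow' u h]
  simp only [Finset.sum_range_succ, Finset.sum_range_zero]
  ring

lemma aux_exp4 {k : Type*} [Field k] (u : Polynomial k) (h : u.natDegree < 4) :
    u = Polynomial.C (u.coeff 3) * Polynomial.X ^ 3 + Polynomial.C (u.coeff 2) * Polynomial.X ^ 2
      + Polynomial.C (u.coeff 1) * Polynomial.X + Polynomial.C (u.coeff 0) := by
  conv_lhs => rw [Polynomial.as_sum_range_C_mul_X_pow' u h]
  simp only [Finset.sum_range_succ, Finset.sum_range_zero]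
  ring

lemma aux_exp5 {k : Type*} [Field k] (u : Polynomial k) (h : u.natDegree < 5) :
    u = Polynomial.C (u.coeff 4) * Polynomial.X ^ 4 + Polynomial.C (u.coeff 3) * Polynomial.X ^ 3
      + Polynomial.C (u.coeff 2) * Polynomial.X ^ 2
      + Polynomial.C (u.coeff 1) * Polynomial.X + Polynomial.C (u.coeff 0) := by
  conv_lhs => rw [Polynomial.as_sum_range_C_mul_X_pow' u h]
  simp only [Finset.sum_range_succ, Finset.sum_range_zero]
  ring

/-- The square root polynomial of case (B). -/
lemma aux_B {k : Type*} [Field k] (h4 : (-4 : k) ≠ 0) (P Q a b : Polynomial k)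
    (hP : P.natDegree ≤ 4) (hP4 : P.coeff 4 = -4) (hQ6 : Q.natDegree ≤ 6)
    (h1 : b + b - a * a = P) (h2 : b * b = Q) :
    b.natDegree < 4 ∧ a.natDegree < 3 ∧ (a.coeff 2 = 2 ∨ a.coeff 2 = -2) := by
  have hb : b.natDegree < 4 := by
    have := Polynomial.natDegree_mul' (p := b) (q := b)
    by_cases hb : b = 0
    · simp [hb]
    · have := Polynomial.natDegree_mul hb hb
      rw [h2] at this; omega
  have haa : a * a = b + b - P := by rw [← h1]; ring
  have hd : (a * a).natDegree ≤ 4 := by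
    rw [haa]
    refine (Polynomial.natDegree_sub_le _ _).trans (max_le ?_ hP)
    exact (Polynomial.natDegree_add_le _ _).trans (by simp; omega)
  have ha : a.natDegree < 3 := by
    by_cases ha : a = 0
    · simp [ha]
    · rw [Polynomial.natDegree_mul ha ha] at hd; omega
  refine ⟨hb, ha, ?_⟩
  have hc : (a * a).coeff 4 = a.coeff 2 * a.coeff 2 :=
    Polynomial.coeff_mul_add_eq_of_natDegree_le (df := 2) (dg := 2) (by omega) (by omega)
  have hb4 : b.coeff 4 = 0 := Polynomial.coeff_eq_zero_of_natDegree_lt (by omega)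
  rw [haa, Polynomial.coeff_sub, Polynomial.coeff_add, hb4, hP4] at hc
  have : (a.coeff 2 - 2) * (a.coeff 2 + 2) = 0 := by linear_combination -hc
  rcases mul_eq_zero.1 this with h | h
  · left; linear_combination h
  · right; linear_combination h

/-- Factorization of a reducible biquadratic over a domain. -/
lemma aux_fact {R : Type*} [CommRing R] [IsDomain R] (P Q : R)
    (h : ¬ Irreducible (Polynomial.X ^ 4 + Polynomial.C P * Polynomial.X ^ 2 + Polynomial.C Q :
      Polynomial R)) :
    (∃ u v : R, u + v = P ∧ u * v = Q) ∨ (∃ a b : R, b + b - a * a = P ∧ b * b = Q) := by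
  set G : Polynomial R := Polynomial.X ^ 4 + Polynomial.C P * Polynomial.X ^ 2 + Polynomial.C Q
    with hG
  have hdeg : G.natDegree = 4 := by rw [hG]; compute_degree!
  have hmon : G.Monic := by rw [hG]; monicity!
  have hne : G ≠ 1 := by
    intro h1; rw [h1, Polynomial.natDegree_one] at hdeg; omega
  rw [hmon.irreducible_iff_natDegree' ] at h
  push Not at h
  obtain ⟨f, q, hf, hq, hfq, hmem⟩ := h hne
  rw [hdeg, Finset.mem_Ioc] at hmem
  have hsum : f.natDegree + q.natDegree = 4 := by
    rw [← hf.natDegree_mul hq, hfq, hdeg]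
  have hcase : q.natDegree = 1 ∨ q.natDegree = 2 := by omega
  rcases hcase with hd | hd
  · have hfd : f.natDegree = 3 := by omega
    have ef := Polynomial.as_sum_range_C_mul_X_pow' f (n := 4) (by omega)
    have eq := Polynomial.as_sum_range_C_mul_X_pow' q (n := 2) (by omega)
    have f3 : f.coeff 3 = 1 := by rw [← hfd]; exact hf
    have q1 : q.coeff 1 = 1 := by rw [← hd]; exact hq
    simp only [Finset.sum_range_succ, Finset.sum_range_zero, f3, q1] at ef eq
    generalize f.coeff 0 = x0 at *
    generalize f.coeff 1 = x1 at *
    generalize f.coeff 2 = x2 at *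
    generalize q.coeff 0 = a at *
    have key : Polynomial.C (a + x2) * Polynomial.X ^ 3
        + Polynomial.C (a * x2 + x1 - P) * Polynomial.X ^ 2
        + Polynomial.C (a * x1 + x0) * Polynomial.X + Polynomial.C (a * x0 - Q) = 0 := by
      have : f * q - G = 0 := by rw [hfq, sub_self]
      rw [← this, ef, eq, hG]
      simp only [map_add, map_sub, map_mul, map_one]
      ring
    have k0 := congrArg (fun p => Polynomial.coeff p 0) key
    have k1 := congrArg (fun p => Polynomial.coeff p 1) key
    have k2 := congrArg (fun p => Polynomial.coeff p 2) key
    have k3 := congrArg (fun p => Polynomial.coeff p 3) key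
    simp [Polynomial.coeff_X, Polynomial.coeff_C, Polynomial.coeff_X_pow,
      -map_add, -map_sub, -map_mul] at k0 k1 k2 k3
    left
    refine ⟨-(a * a), P + a * a, by ring, ?_⟩
    linear_combination k0 - a * k1 + a * a * k2 - a * a * a * k3
  · have hfd : f.natDegree = 2 := by omega
    have ef := Polynomial.as_sum_range_C_mul_X_pow' f (n := 3) (by omega)
    have eq := Polynomial.as_sum_range_C_mul_X_pow' q (n := 3) (by omega)
    have f3 : f.coeff 2 = 1 := by rw [← hfd]; exact hf
    have q1 : q.coeff 2 = 1 := by rw [← hd]; exact hq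
    simp only [Finset.sum_range_succ, Finset.sum_range_zero, f3, q1] at ef eq
    generalize f.coeff 0 = b at *
    generalize f.coeff 1 = a at *
    generalize q.coeff 0 = d at *
    generalize q.coeff 1 = c at *
    have key : Polynomial.C (a + c) * Polynomial.X ^ 3
        + Polynomial.C (b + d + a * c - P) * Polynomial.X ^ 2
        + Polynomial.C (a * d + b * c) * Polynomial.X + Polynomial.C (b * d - Q) = 0 := by
      have : f * q - G = 0 := by rw [hfq, sub_self]
      rw [← this, ef, eq, hG]
      simp only [map_add, map_sub, map_mul, map_one]
      ring
    have k0 := congrArg (fun p => Polynomial.coeff p 0) key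
    have k1 := congrArg (fun p => Polynomial.coeff p 1) key
    have k2 := congrArg (fun p => Polynomial.coeff p 2) key
    have k3 := congrArg (fun p => Polynomial.coeff p 3) key
    simp [Polynomial.coeff_X, Polynomial.coeff_C, Polynomial.coeff_X_pow,
      -map_add, -map_sub, -map_mul] at k0 k1 k2 k3
    have hz : a * (d - b) = 0 := by linear_combination k1 - b * k3
    rcases mul_eq_zero.1 hz with h0 | h0
    · left
      refine ⟨b, d, ?_, ?_⟩
      · linear_combination k2 - c * h0
      · linear_combination k0
    · right
      refine ⟨a, b, ?_, ?_⟩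
      · linear_combination k2 - h0 - a * k3
      · linear_combination k0 - b * h0

/-- The identification of bivariate polynomials with polynomials in y over k[x]. -/
noncomputable def auxEquiv (k : Type*) [Field k] :
    Polynomial (Polynomial k) ≃+* MvPolynomial (Fin 2) k :=
  RingEquiv.ofRingHom
    (Polynomial.eval₂RingHom (Polynomial.eval₂RingHom (C : k →+* MvPolynomial (Fin 2) k) (X 0)) (X 1))
    (MvPolynomial.eval₂Hom (Polynomial.C.comp Polynomial.C)
      ![Polynomial.C Polynomial.X, Polynomial.X])
    (by
      apply MvPolynomial.ringHom_ext
      · intro r; simp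
      · intro i; fin_cases i <;> simp)
    (by
      apply Polynomial.ringHom_ext'
      · apply Polynomial.ringHom_ext
        · intro r; simp
        · simp
      · simp)

lemma auxEquiv_CC {k : Type*} [Field k] (c : k) :
    auxEquiv k (Polynomial.C (Polynomial.C c)) = C c := by simp [auxEquiv]
lemma auxEquiv_CX {k : Type*} [Field k] :
    auxEquiv k (Polynomial.C Polynomial.X) = X 0 := by simp [auxEquiv]
lemma auxEquiv_X {k : Type*} [Field k] :
    auxEquiv k Polynomial.X = X 1 := by simp [auxEquiv]

/-- Factorization patterns of the bivariate sextic g: if g is reducible over k,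
then g = H1·H2 with (H1, H2) of type (A) or of type (B). -/
theorem stmt_3 {k : Type*} [Field k] (hchar : ringChar k ≠ 2)
    (b60 b50 b42 b40 b32 b30 b22 b20 b12 b10 b04 b02 b00 : k)
    (hb42 : b42 = -4) (hb04 : b04 = 1)
    (g : MvPolynomial (Fin 2) k)
    (hg : g = C b60 * X 0 ^ 6 + C b42 * X 0 ^ 4 * X 1 ^ 2
      + C b50 * X 0 ^ 5 + C b32 * X 0 ^ 3 * X 1 ^ 2
      + C b40 * X 0 ^ 4 + C b22 * X 0 ^ 2 * X 1 ^ 2 + C b04 * X 1 ^ 4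
      + C b30 * X 0 ^ 3 + C b12 * X 0 * X 1 ^ 2
      + C b20 * X 0 ^ 2 + C b02 * X 1 ^ 2 + C b10 * X 0 + C b00)
    (hnz : ¬ (b60 = 0 ∧ b40 = 0 ∧ b20 = 0 ∧ b00 = 0))
    (hred : ¬ Irreducible g) :
    (∃ a1 a2 a3 a4 a5 a6 a7 : k,
      g = (X 1 ^ 2 + (C a1 * X 0 ^ 2 + C a2 * X 0 + C a3))
        * (X 1 ^ 2 + (C (-4 : k) * X 0 ^ 4 + C a4 * X 0 ^ 3 + C a5 * X 0 ^ 2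
            + C a6 * X 0 + C a7)))
    ∨ (∃ a1 a2 a3 a4 a5 a6 : k,
      g = (X 1 ^ 2 + (C 2 * X 0 ^ 2 + C a1 * X 0 + C a2) * X 1
            + (C a3 * X 0 ^ 3 + C a4 * X 0 ^ 2 + C a5 * X 0 + C a6))
        * (X 1 ^ 2 + (C (-2 : k) * X 0 ^ 2 - C a1 * X 0 - C a2) * X 1
            + (C a3 * X 0 ^ 3 + C a4 * X 0 ^ 2 + C a5 * X 0 + C a6))) := by
  subst hb42 hb04
  have h2 : (2 : k) ≠ 0 := Ring.two_ne_zero hchar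
  have h4 : (-4 : k) ≠ 0 := by
    have : (-4 : k) = -(2 * 2) := by norm_num
    rw [this]; exact neg_ne_zero.2 (mul_ne_zero h2 h2)
  obtain ⟨P, hPdef⟩ : ∃ P : Polynomial k, P = Polynomial.C (-4) * Polynomial.X ^ 4
    + Polynomial.C b32 * Polynomial.X ^ 3 + Polynomial.C b22 * Polynomial.X ^ 2
    + Polynomial.C b12 * Polynomial.X + Polynomial.C b02 := ⟨_, rfl⟩
  obtain ⟨Q, hQdef⟩ : ∃ Q : Polynomial k, Q = Polynomial.C b60 * Polynomial.X ^ 6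
    + Polynomial.C b50 * Polynomial.X ^ 5 + Polynomial.C b40 * Polynomial.X ^ 4
    + Polynomial.C b30 * Polynomial.X ^ 3 + Polynomial.C b20 * Polynomial.X ^ 2
    + Polynomial.C b10 * Polynomial.X + Polynomial.C b00 := ⟨_, rfl⟩
  have hgG : g = auxEquiv k (Polynomial.X ^ 4 + Polynomial.C P * Polynomial.X ^ 2
      + Polynomial.C Q) := by
    rw [hg, hPdef, hQdef]
    simp only [map_add, map_mul, map_pow, auxEquiv_CC, auxEquiv_CX, auxEquiv_X, map_one]
    ring
  have hP : P.natDegree ≤ 4 := by rw [hPdef]; compute_degree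
  have hP4 : P.coeff 4 = -4 := by
    rw [hPdef]
    simp [Polynomial.coeff_X, Polynomial.coeff_C, Polynomial.coeff_X_pow, -map_neg]
  have hQ6 : Q.natDegree ≤ 6 := by rw [hQdef]; compute_degree
  have hQ : Q ≠ 0 := by
    intro h0
    apply hnz
    have e : ∀ n, Q.coeff n = 0 := by intro n; rw [h0]; simp
    have e0 := e 0
    have e2 := e 2
    have e4 := e 4
    have e6 := e 6
    rw [hQdef] at e0 e2 e4 e6
    simp [Polynomial.coeff_X, Polynomial.coeff_C, Polynomial.coeff_X_pow] at e0 e2 e4 e6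
    exact ⟨e6, e4, e2, e0⟩
  have hred' : ¬ Irreducible (Polynomial.X ^ 4 + Polynomial.C P * Polynomial.X ^ 2
      + Polynomial.C Q : Polynomial (Polynomial k)) := by
    rwa [hgG, MulEquiv.irreducible_iff] at hred
  clear hg hPdef hQdef
  rcases aux_fact P Q hred' with ⟨u, v, e1, e2⟩ | ⟨a, b, e1, e2⟩
  · left
    wlog hle : u.natDegree ≤ v.natDegree generalizing u v
    · exact this v u (by rw [add_comm, e1]) (by rw [mul_comm, e2]) (by omega)
    obtain ⟨hu, hv, hv4⟩ := aux_A h4 P Q u v hP hP4 hQ hQ6 e1 e2 hle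
    have eu := aux_exp3 u hu
    have ev := aux_exp5 v hv
    rw [hv4] at ev
    refine ⟨u.coeff 2, u.coeff 1, u.coeff 0, v.coeff 3, v.coeff 2, v.coeff 1, v.coeff 0, ?_⟩
    have hG : (Polynomial.X ^ 4 + Polynomial.C P * Polynomial.X ^ 2
      + Polynomial.C Q : Polynomial (Polynomial k))
      = (Polynomial.X ^ 2 + Polynomial.C u) * (Polynomial.X ^ 2 + Polynomial.C v) := by
      rw [← e1, ← e2, map_add, map_mul]; ring
    rw [hgG, hG]
    conv_lhs => rw [eu, ev]
    simp only [map_add, map_mul, map_pow, auxEquiv_CC, auxEquiv_CX, auxEquiv_X]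
  · right
    wlog ha2 : a.coeff 2 = 2 generalizing a
    · obtain ⟨_, _, h | h⟩ := aux_B h4 P Q a b hP hP4 hQ6 e1 e2
      · exact absurd h ha2
      · exact this (-a) (by rw [← e1]; ring) (by rw [Polynomial.coeff_neg, h, neg_neg])
    obtain ⟨hb, ha, _⟩ := aux_B h4 P Q a b hP hP4 hQ6 e1 e2
    have ea := aux_exp3 a ha
    have eb := aux_exp4 b hb
    rw [ha2] at ea
    refine ⟨a.coeff 1, a.coeff 0, b.coeff 3, b.coeff 2, b.coeff 1, b.coeff 0, ?_⟩
    have hG : (Polynomial.X ^ 4 + Polynomial.C P * Polynomial.X ^ 2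
      + Polynomial.C Q : Polynomial (Polynomial k))
      = (Polynomial.X ^ 2 + Polynomial.C a * Polynomial.X + Polynomial.C b)
        * (Polynomial.X ^ 2 - Polynomial.C a * Polynomial.X + Polynomial.C b) := by
      rw [← e1, ← e2, map_sub, map_add, map_mul, map_mul]; ring
    rw [hgG, hG]
    conv_lhs => rw [ea, eb]
    simp only [map_add, map_sub, map_mul, map_pow, auxEquiv_CC, auxEquiv_CX, auxEquiv_X,
      map_neg (C : k →+* MvPolynomial (Fin 2) k)]
    ring
end

section
/- The singular locus Sing of the projective sextic F = 0 is exactly {(0:1:0)} ∪ S∞ ∪ {(ξ:0:1) : ξ ∈ k, h1(ξ) = 0}, where S∞ = {(1:0:0)} if σ1 = τ1 and S∞ = ∅ otherwise. -/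
open MvPolynomial


section helpers

variable {k : Type*} [Field k]

/-- The explicit sextic. -/
noncomputable def sexticG (a1 a2 a3 a4 b1 b2 b3 b4 s1 s2 s3 s4 : k) : MvPolynomial (Fin 3) k :=
  X 1 ^ 4 * X 2 ^ 2 - C 2 * ((X 0 - C a1 * X 2) * (X 0 - C a2 * X 2) * (X 0 - C a3 * X 2) *
    (X 0 - C a4 * X 2) + (X 0 - C b1 * X 2) * (X 0 - C b2 * X 2) * (X 0 - C b3 * X 2) *
    (X 0 - C b4 * X 2)) * X 1 ^ 2
    + (C s1 * X 0 ^ 3 - C s2 * X 0 ^ 2 * X 2 + C s3 * X 0 * X 2 ^ 2 - C s4 * X 2 ^ 3) ^ 2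

lemma eval_sexticG (a1 a2 a3 a4 b1 b2 b3 b4 s1 s2 s3 s4 : k) (v : Fin 3 → k) :
    eval v (sexticG a1 a2 a3 a4 b1 b2 b3 b4 s1 s2 s3 s4) =
      v 1 ^ 4 * v 2 ^ 2 - 2 * ((v 0 - a1 * v 2) * (v 0 - a2 * v 2) * (v 0 - a3 * v 2) *
    (v 0 - a4 * v 2) + (v 0 - b1 * v 2) * (v 0 - b2 * v 2) * (v 0 - b3 * v 2) *
    (v 0 - b4 * v 2)) * v 1 ^ 2
    + (s1 * v 0 ^ 3 - s2 * v 0 ^ 2 * v 2 + s3 * v 0 * v 2 ^ 2 - s4 * v 2 ^ 3) ^ 2 := by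
  simp [sexticG]

lemma eval_pderiv0_sexticG (a1 a2 a3 a4 b1 b2 b3 b4 s1 s2 s3 s4 : k) (v : Fin 3 → k) :
    eval v (pderiv 0 (sexticG a1 a2 a3 a4 b1 b2 b3 b4 s1 s2 s3 s4)) =
      - 2 * ((v 0 - a2 * v 2) * (v 0 - a3 * v 2) * (v 0 - a4 * v 2)
        + (v 0 - a1 * v 2) * (v 0 - a3 * v 2) * (v 0 - a4 * v 2)
        + (v 0 - a1 * v 2) * (v 0 - a2 * v 2) * (v 0 - a4 * v 2)
        + (v 0 - a1 * v 2) * (v 0 - a2 * v 2) * (v 0 - a3 * v 2)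
        + (v 0 - b2 * v 2) * (v 0 - b3 * v 2) * (v 0 - b4 * v 2)
        + (v 0 - b1 * v 2) * (v 0 - b3 * v 2) * (v 0 - b4 * v 2)
        + (v 0 - b1 * v 2) * (v 0 - b2 * v 2) * (v 0 - b4 * v 2)
        + (v 0 - b1 * v 2) * (v 0 - b2 * v 2) * (v 0 - b3 * v 2)) * v 1 ^ 2
    + 2 * (s1 * v 0 ^ 3 - s2 * v 0 ^ 2 * v 2 + s3 * v 0 * v 2 ^ 2 - s4 * v 2 ^ 3)
      * (3 * s1 * v 0 ^ 2 - 2 * s2 * v 0 * v 2 + s3 * v 2 ^ 2) := by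
  simp [sexticG, Derivation.leibniz, Derivation.leibniz_pow, pderiv_X]
  ring

lemma eval_pderiv1_sexticG (a1 a2 a3 a4 b1 b2 b3 b4 s1 s2 s3 s4 : k) (v : Fin 3 → k) :
    eval v (pderiv 1 (sexticG a1 a2 a3 a4 b1 b2 b3 b4 s1 s2 s3 s4)) =
      4 * v 1 ^ 3 * v 2 ^ 2 - 4 * ((v 0 - a1 * v 2) * (v 0 - a2 * v 2) * (v 0 - a3 * v 2) *
    (v 0 - a4 * v 2) + (v 0 - b1 * v 2) * (v 0 - b2 * v 2) * (v 0 - b3 * v 2) *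
    (v 0 - b4 * v 2)) * v 1 := by
  simp [sexticG, Derivation.leibniz, Derivation.leibniz_pow, pderiv_X]
  ring

lemma eval_pderiv2_sexticG (a1 a2 a3 a4 b1 b2 b3 b4 s1 s2 s3 s4 : k) (v : Fin 3 → k) :
    eval v (pderiv 2 (sexticG a1 a2 a3 a4 b1 b2 b3 b4 s1 s2 s3 s4)) =
      2 * v 1 ^ 4 * v 2 + 2 * (a1 * (v 0 - a2 * v 2) * (v 0 - a3 * v 2) * (v 0 - a4 * v 2)
        + a2 * (v 0 - a1 * v 2) * (v 0 - a3 * v 2) * (v 0 - a4 * v 2)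
        + a3 * (v 0 - a1 * v 2) * (v 0 - a2 * v 2) * (v 0 - a4 * v 2)
        + a4 * (v 0 - a1 * v 2) * (v 0 - a2 * v 2) * (v 0 - a3 * v 2)
        + b1 * (v 0 - b2 * v 2) * (v 0 - b3 * v 2) * (v 0 - b4 * v 2)
        + b2 * (v 0 - b1 * v 2) * (v 0 - b3 * v 2) * (v 0 - b4 * v 2)
        + b3 * (v 0 - b1 * v 2) * (v 0 - b2 * v 2) * (v 0 - b4 * v 2)
        + b4 * (v 0 - b1 * v 2) * (v 0 - b2 * v 2) * (v 0 - b3 * v 2)) * v 1 ^ 2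
    + 2 * (s1 * v 0 ^ 3 - s2 * v 0 ^ 2 * v 2 + s3 * v 0 * v 2 ^ 2 - s4 * v 2 ^ 3)
      * (- s2 * v 0 ^ 2 + 2 * s3 * v 0 * v 2 - 3 * s4 * v 2 ^ 2) := by
  simp [sexticG, Derivation.leibniz, Derivation.leibniz_pow, pderiv_X]
  ring

lemma homog_eval {F : MvPolynomial (Fin 3) k} {n : ℕ} (hF : F.IsHomogeneous n) (c : k)
    (v : Fin 3 → k) : eval (fun i => c * v i) F = c ^ n * eval v F := by
  rw [eval_eq, eval_eq, Finset.mul_sum]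
  refine Finset.sum_congr rfl fun d hd => ?_
  have h := hF (mem_support_iff.mp hd)
  simp only [mul_pow, Finset.prod_mul_distrib]
  rw [Finset.prod_pow_eq_pow_sum]
  have : ∑ i ∈ d.support, d i = n := by
    rw [← h, Finsupp.weight_apply, Finsupp.sum]; simp
  rw [this]; ring


lemma no_double (x z a1 a2 a3 a4 b1 b2 b3 b4 : k) (hz : z ≠ 0)
    (hd : ([a1, a2, a3, a4, b1, b2, b3, b4] : List k).Pairwise (· ≠ ·))
    (A1 A2 A3 A4 B1 B2 B3 B4 : k)
    (hA1 : A1 = x - a1 * z) (hA2 : A2 = x - a2 * z) (hA3 : A3 = x - a3 * z) (hA4 : A4 = x - a4 * z)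
    (hB1 : B1 = x - b1 * z) (hB2 : B2 = x - b2 * z) (hB3 : B3 = x - b3 * z) (hB4 : B4 = x - b4 * z)
    (h0 : A1 * A2 * A3 * A4 * (B1 * B2 * B3 * B4) = 0)
    (h1 : (A2 * A3 * A4 + A1 * A3 * A4 + A1 * A2 * A4 + A1 * A2 * A3) * (B1 * B2 * B3 * B4)
      + A1 * A2 * A3 * A4 * (B2 * B3 * B4 + B1 * B3 * B4 + B1 * B2 * B4 + B1 * B2 * B3) = 0) :
    False := by
  have key : ∀ a b : k, a ≠ b → x - a * z = 0 → x - b * z ≠ 0 := by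
    intro a b hab h h'
    have : (a - b) * z = 0 := by linear_combination h' - h
    rcases mul_eq_zero.mp this with h | h
    · exact hab (sub_eq_zero.mp h)
    · exact hz h
  have hd' : ([A1, A2, A3, A4, B1, B2, B3, B4] : List k).Pairwise (fun u w => u = 0 → w ≠ 0) := by
    have := List.Pairwise.map (f := fun a => x - a * z) (S := fun u w => u = 0 → w ≠ 0)
      key hd
    simpa [hA1, hA2, hA3, hA4, hB1, hB2, hB3, hB4] using this
  clear hA1 hA2 hA3 hA4 hB1 hB2 hB3 hB4 key hd
  simp only [mul_eq_zero] at h0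
  simp only [List.pairwise_cons, List.mem_cons, forall_eq_or_imp] at hd'
  rcases h0 with (((h | h) | h) | h) | (((h | h) | h) | h) <;> subst h <;>
    simp_all

end helpers

/-- The singular locus of the projective sextic F = 0 is exactly
{(0:1:0)} ∪ S∞ ∪ {(ξ:0:1) : h1(ξ) = 0}, where S∞ = {(1:0:0)} if σ1 = τ1 and
S∞ = ∅ otherwise. -/
theorem stmt_11
    {k : Type*} [Field k] [IsAlgClosed k]
    (p : ℕ) [CharP k p] (hp : p = 0 ∨ 5 ≤ p)
    (α1 α2 α3 α4 β1 β2 β3 β4 : k)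
    (hdist : ([α1, α2, α3, α4, β1, β2, β3, β4] : List k).Pairwise (· ≠ ·))
    (σ1 σ2 σ3 σ4 τ1 τ2 τ3 τ4 : k)
    (hσ1 : σ1 = α1 + α2 + α3 + α4)
    (hσ2 : σ2 = α1 * α2 + α1 * α3 + α1 * α4 + α2 * α3 + α2 * α4 + α3 * α4)
    (hσ3 : σ3 = α1 * α2 * α3 + α1 * α2 * α4 + α1 * α3 * α4 + α2 * α3 * α4)
    (hσ4 : σ4 = α1 * α2 * α3 * α4)
    (hτ1 : τ1 = β1 + β2 + β3 + β4)
    (hτ2 : τ2 = β1 * β2 + β1 * β3 + β1 * β4 + β2 * β3 + β2 * β4 + β3 * β4)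
    (hτ3 : τ3 = β1 * β2 * β3 + β1 * β2 * β4 + β1 * β3 * β4 + β2 * β3 * β4)
    (hτ4 : τ4 = β1 * β2 * β3 * β4)
    (φ1 φ2 f : MvPolynomial (Fin 2) k)
    (hφ1 : φ1 = (X 0 - C α1) * (X 0 - C α2) * (X 0 - C α3) * (X 0 - C α4))
    (hφ2 : φ2 = (X 0 - C β1) * (X 0 - C β2) * (X 0 - C β3) * (X 0 - C β4))
    (hf : f = X 1 ^ 4 - C 2 * (φ1 + φ2) * X 1 ^ 2 + (φ1 - φ2) ^ 2)
    (F : MvPolynomial (Fin 3) k)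
    (hFhom : F.IsHomogeneous 6)
    (hFf : aeval ![(X 0 : MvPolynomial (Fin 2) k), X 1, 1] F = f)
    (Sing : Set (Projectivization k (Fin 3 → k)))
    (hSing : ∀ P : Projectivization k (Fin 3 → k),
      P ∈ Sing ↔ (eval P.rep F = 0 ∧
        eval P.rep (pderiv 0 F) = 0 ∧
        eval P.rep (pderiv 1 F) = 0 ∧
        eval P.rep (pderiv 2 F) = 0))
    (h1 : k → k)
    (hh1 : ∀ x : k, h1 x = (σ1 - τ1) * x ^ 3 - (σ2 - τ2) * x ^ 2 + (σ3 - τ3) * x - (σ4 - τ4)) :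
    Sing = {P : Projectivization k (Fin 3 → k) |
      P = Projectivization.mk k (![0, 1, 0] : Fin 3 → k)
            (by intro hc; simpa using congrFun hc 1)
      ∨ (σ1 = τ1 ∧ P = Projectivization.mk k (![1, 0, 0] : Fin 3 → k)
            (by intro hc; simpa using congrFun hc 0))
      ∨ (∃ ξ : k, h1 ξ = 0 ∧ P = Projectivization.mk k (![ξ, 0, 1] : Fin 3 → k)
            (by intro hc; simpa using congrFun hc 2))} := by
  have h2 : (2 : k) ≠ 0 := by
    intro h
    have h' : ((2 : ℕ) : k) = 0 := by exact_mod_cast h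
    have hd := (CharP.cast_eq_zero_iff k p 2).mp h'
    rcases hp with rfl | hp
    · simp at hd
    · have := Nat.le_of_dvd (by norm_num) hd
      omega
  have hFG : F = sexticG α1 α2 α3 α4 β1 β2 β3 β4 (σ1 - τ1) (σ2 - τ2) (σ3 - τ3) (σ4 - τ4) := by
    have : (X 2 : MvPolynomial (Fin 3) k) * F = X 2 *
        sexticG α1 α2 α3 α4 β1 β2 β3 β4 (σ1 - τ1) (σ2 - τ2) (σ3 - τ3) (σ4 - τ4) := by
      have : Infinite k := IsAlgClosed.instInfinite
      apply MvPolynomial.funext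
      intro v
      rw [map_mul, map_mul, eval_X, eval_sexticG]
      by_cases hz : v 2 = 0
      · simp [hz]
      congr 1
      have e1 : v = fun i => v 2 * (![v 0 / v 2, v 1 / v 2, 1] : Fin 3 → k) i := by
        funext i
        fin_cases i <;> simp <;> field_simp
      have e2 : eval (![v 0 / v 2, v 1 / v 2, 1] : Fin 3 → k) F
          = eval (![v 0 / v 2, v 1 / v 2] : Fin 2 → k) f := by
        rw [← hFf, ← coe_aeval_eq_eval, ← coe_aeval_eq_eval]
        change _ = (aeval _) ((aeval _) F)
        rw [← AlgHom.comp_apply, comp_aeval]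
        change (aeval _) F = _
        congr 2
        funext i
        fin_cases i <;> simp
      conv_lhs => rw [e1]
      rw [homog_eval hFhom, e2, hf, hφ1, hφ2, hσ1, hσ2, hσ3, hσ4, hτ1, hτ2, hτ3, hτ4]
      simp
      field_simp
      ring
    exact mul_left_cancel₀ (X_ne_zero _) this
  ext P
  rw [hSing, hFG, eval_sexticG, eval_pderiv0_sexticG, eval_pderiv1_sexticG, eval_pderiv2_sexticG]
  have key : ∀ (w : Fin 3 → k) (hw : w ≠ 0), P = Projectivization.mk k w hw ↔
      ∃ a : k, a • w = P.rep := by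
    intro w hw
    conv_lhs => rw [← P.mk_rep]
    rw [Projectivization.mk_eq_mk_iff']
  have hne := P.rep_nonzero
  simp only [Set.mem_ofPred_eq, key]
  generalize P.rep = v at hne ⊢
  constructor
  · rintro ⟨h0, hx, hy, hz⟩
    by_cases hv2 : v 2 = 0
    · simp only [hv2, mul_zero, sub_zero] at h0 hx hy hz
      have hxy : v 0 = 0 ∨ v 1 = 0 := by
        have : 2 * 2 * 2 * (v 0 ^ 4 * v 1) = 0 := by linear_combination -hy
        simpa [h2] using this
      rcases hxy with h | h
      · left
        refine ⟨v 1, ?_⟩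
        funext i
        fin_cases i <;> simp [h, hv2]
      · right; left
        have hv0 : v 0 ≠ 0 := by
          intro h'
          apply hne
          funext i
          fin_cases i <;> simp [h, h', hv2]
        refine ⟨?_, v 0, ?_⟩
        · simp [h, hv0] at h0
          exact sub_eq_zero.mp h0
        · funext i
          fin_cases i <;> simp [h, hv2]
    · right; right
      have hv1 : v 1 = 0 := by
        by_contra hv1
        have hS : v 1 ^ 2 * v 2 ^ 2 = (v 0 - α1 * v 2) * (v 0 - α2 * v 2) * (v 0 - α3 * v 2) *
            (v 0 - α4 * v 2) + (v 0 - β1 * v 2) * (v 0 - β2 * v 2) * (v 0 - β3 * v 2) *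
            (v 0 - β4 * v 2) := by
          apply mul_left_cancel₀ (mul_ne_zero (mul_ne_zero h2 h2) hv1)
          linear_combination hy
        have hD : ((σ1 - τ1) * v 0 ^ 3 - (σ2 - τ2) * v 0 ^ 2 * v 2 + (σ3 - τ3) * v 0 * v 2 ^ 2
            - (σ4 - τ4) * v 2 ^ 3) * v 2 =
            (v 0 - β1 * v 2) * (v 0 - β2 * v 2) * (v 0 - β3 * v 2) * (v 0 - β4 * v 2)
            - (v 0 - α1 * v 2) * (v 0 - α2 * v 2) * (v 0 - α3 * v 2) * (v 0 - α4 * v 2) := by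
          rw [hσ1, hσ2, hσ3, hσ4, hτ1, hτ2, hτ3, hτ4]; ring
        have hD' : (3 * (σ1 - τ1) * v 0 ^ 2 - 2 * (σ2 - τ2) * v 0 * v 2
            + (σ3 - τ3) * v 2 ^ 2) * v 2 =
            ((v 0 - β2 * v 2) * (v 0 - β3 * v 2) * (v 0 - β4 * v 2)
            + (v 0 - β1 * v 2) * (v 0 - β3 * v 2) * (v 0 - β4 * v 2)
            + (v 0 - β1 * v 2) * (v 0 - β2 * v 2) * (v 0 - β4 * v 2)
            + (v 0 - β1 * v 2) * (v 0 - β2 * v 2) * (v 0 - β3 * v 2))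
            - ((v 0 - α2 * v 2) * (v 0 - α3 * v 2) * (v 0 - α4 * v 2)
            + (v 0 - α1 * v 2) * (v 0 - α3 * v 2) * (v 0 - α4 * v 2)
            + (v 0 - α1 * v 2) * (v 0 - α2 * v 2) * (v 0 - α4 * v 2)
            + (v 0 - α1 * v 2) * (v 0 - α2 * v 2) * (v 0 - α3 * v 2)) := by
          rw [hσ1, hσ2, hσ3, hτ1, hτ2, hτ3]; ring
        clear hy hz
        generalize (σ1 - τ1) * v 0 ^ 3 - (σ2 - τ2) * v 0 ^ 2 * v 2 + (σ3 - τ3) * v 0 * v 2 ^ 2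
            - (σ4 - τ4) * v 2 ^ 3 = D at *
        generalize 3 * (σ1 - τ1) * v 0 ^ 2 - 2 * (σ2 - τ2) * v 0 * v 2
            + (σ3 - τ3) * v 2 ^ 2 = D' at *
        refine no_double (v 0) (v 2) _ _ _ _ _ _ _ _ hv2 hdist _ _ _ _ _ _ _ _
          rfl rfl rfl rfl rfl rfl rfl rfl ?_ ?_
        all_goals
          generalize v 0 - α1 * v 2 = A1 at *
          generalize v 0 - α2 * v 2 = A2 at *
          generalize v 0 - α3 * v 2 = A3 at *
          generalize v 0 - α4 * v 2 = A4 at *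
          generalize v 0 - β1 * v 2 = B1 at *
          generalize v 0 - β2 * v 2 = B2 at *
          generalize v 0 - β3 * v 2 = B3 at *
          generalize v 0 - β4 * v 2 = B4 at *
          apply mul_left_cancel₀ (mul_ne_zero h2 h2)
        · linear_combination (-v 2 ^ 2) * h0 +
            (v 1 ^ 2 * v 2 ^ 2 - (A1 * A2 * A3 * A4 + B1 * B2 * B3 * B4)) * hS +
            (D * v 2 + (B1 * B2 * B3 * B4 - A1 * A2 * A3 * A4)) * hD
        · linear_combination (-v 2 ^ 2) * hx - 2 * (A2 * A3 * A4 + A1 * A3 * A4 + A1 * A2 * A4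
              + A1 * A2 * A3 + B2 * B3 * B4 + B1 * B3 * B4 + B1 * B2 * B4 + B1 * B2 * B3) * hS
            + 2 * (D' * v 2) * hD + 2 * (B1 * B2 * B3 * B4 - A1 * A2 * A3 * A4) * hD'
      have hH : (σ1 - τ1) * v 0 ^ 3 - (σ2 - τ2) * v 0 ^ 2 * v 2 + (σ3 - τ3) * v 0 * v 2 ^ 2
          - (σ4 - τ4) * v 2 ^ 3 = 0 := by
        simpa [hv1] using h0
      refine ⟨v 0 / v 2, ?_, v 2, ?_⟩
      · rw [hh1]
        field_simp
        linear_combination hH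
      · funext i
        fin_cases i <;> simp [hv1]
        field_simp
  · rintro (⟨a, rfl⟩ | ⟨hs, a, rfl⟩ | ⟨ξ, hξ, a, rfl⟩)
    · simp
    · simp [hs]
    · rw [hh1] at hξ
      have hH : (σ1 - τ1) * (a * ξ) ^ 3 - (σ2 - τ2) * (a * ξ) ^ 2 * a
          + (σ3 - τ3) * (a * ξ) * a ^ 2 - (σ4 - τ4) * a ^ 3 = 0 := by
        linear_combination a ^ 3 * hξ
      simp [hH]
end

section
/- Assume σ1 ≠ τ1 and Res_x(h1, h1′) ≠ 0. Then h1 has exactly 3 distinct roots ξ1, ξ2, ξ3 in k, the singular locus Sing equals {(0:1:0), (ξ1:0:1), (ξ2:0:1), (ξ3:0:1)}, and Sing has exactly 4 elements. -/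
open MvPolynomial

lemma aux_cubic {k : Type*} [Field k] [IsAlgClosed k] (a b c d : k) (ha : a ≠ 0) :
    ∃ r1 r2 r3 : k, b = -a * (r1 + r2 + r3) ∧ c = a * (r1 * r2 + r1 * r3 + r2 * r3) ∧
      d = -a * (r1 * r2 * r3) := by
  obtain ⟨r1, h1⟩ := IsAlgClosed.exists_root
    (Polynomial.C a * Polynomial.X ^ 3 + Polynomial.C b * Polynomial.X ^ 2 +
      Polynomial.C c * Polynomial.X + Polynomial.C d)
    (by rw [Polynomial.degree_cubic ha]; decide)
  obtain ⟨r2, h2⟩ := IsAlgClosed.exists_root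
    (Polynomial.C a * Polynomial.X ^ 2 + Polynomial.C (b + a * r1) * Polynomial.X +
      Polynomial.C (c + b * r1 + a * r1 ^ 2))
    (by rw [Polynomial.degree_quadratic ha]; decide)
  simp [Polynomial.IsRoot] at h1 h2
  have h3 : a * (-b / a - r1 - r2) = -b - a * r1 - a * r2 := by field_simp
  refine ⟨r1, r2, -b / a - r1 - r2, ?_, ?_, ?_⟩
  · linear_combination h3
  · linear_combination h2 - (r1 + r2) * h3
  · linear_combination h1 - r1 * h2 + r1 * r2 * h3

/-- explicit homogenization -/
noncomputable def auxG {k : Type*} [Field k] (e1 e2 e3 e4 d1 d2 d3 d4 : k) :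
    MvPolynomial (Fin 3) k :=
  X 1 ^ 4 * X 2 ^ 2 - C 2 * (C 2 * X 0 ^ 4 - C e1 * X 0 ^ 3 * X 2 + C e2 * X 0 ^ 2 * X 2 ^ 2
    - C e3 * X 0 * X 2 ^ 3 + C e4 * X 2 ^ 4) * X 1 ^ 2
    + (C d1 * X 0 ^ 3 - C d2 * X 0 ^ 2 * X 2 + C d3 * X 0 * X 2 ^ 2 - C d4 * X 2 ^ 3) ^ 2

section
variable {k : Type*} [Field k] (e1 e2 e3 e4 d1 d2 d3 d4 : k) (v : Fin 3 → k)

lemma auxG_eval : eval v (auxG e1 e2 e3 e4 d1 d2 d3 d4) =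
    v 1 ^ 4 * v 2 ^ 2 - 2 * (2 * v 0 ^ 4 - e1 * v 0 ^ 3 * v 2 + e2 * v 0 ^ 2 * v 2 ^ 2
    - e3 * v 0 * v 2 ^ 3 + e4 * v 2 ^ 4) * v 1 ^ 2
    + (d1 * v 0 ^ 3 - d2 * v 0 ^ 2 * v 2 + d3 * v 0 * v 2 ^ 2 - d4 * v 2 ^ 3) ^ 2 := by
  simp [auxG]

lemma auxG_eval0 : eval v (pderiv 0 (auxG e1 e2 e3 e4 d1 d2 d3 d4)) =
    - 2 * (8 * v 0 ^ 3 - 3 * e1 * v 0 ^ 2 * v 2 + 2 * e2 * v 0 * v 2 ^ 2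
    - e3 * v 2 ^ 3) * v 1 ^ 2
    + 2 * (d1 * v 0 ^ 3 - d2 * v 0 ^ 2 * v 2 + d3 * v 0 * v 2 ^ 2 - d4 * v 2 ^ 3) *
      (3 * d1 * v 0 ^ 2 - 2 * d2 * v 0 * v 2 + d3 * v 2 ^ 2) := by
  simp [auxG, Derivation.leibniz, Derivation.leibniz_pow, pderiv_X]
  ring

lemma auxG_eval1 : eval v (pderiv 1 (auxG e1 e2 e3 e4 d1 d2 d3 d4)) =
    4 * v 1 ^ 3 * v 2 ^ 2 - 4 * (2 * v 0 ^ 4 - e1 * v 0 ^ 3 * v 2 + e2 * v 0 ^ 2 * v 2 ^ 2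
    - e3 * v 0 * v 2 ^ 3 + e4 * v 2 ^ 4) * v 1 := by
  simp [auxG, Derivation.leibniz, Derivation.leibniz_pow, pderiv_X]
  ring

lemma auxG_eval2 : eval v (pderiv 2 (auxG e1 e2 e3 e4 d1 d2 d3 d4)) =
    2 * v 1 ^ 4 * v 2 - 2 * (- e1 * v 0 ^ 3 + 2 * e2 * v 0 ^ 2 * v 2
    - 3 * e3 * v 0 * v 2 ^ 2 + 4 * e4 * v 2 ^ 3) * v 1 ^ 2
    + 2 * (d1 * v 0 ^ 3 - d2 * v 0 ^ 2 * v 2 + d3 * v 0 * v 2 ^ 2 - d4 * v 2 ^ 3) *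
      (- d2 * v 0 ^ 2 + 2 * d3 * v 0 * v 2 - 3 * d4 * v 2 ^ 2) := by
  simp [auxG, Derivation.leibniz, Derivation.leibniz_pow, pderiv_X]
  ring

end

/-- a root of a product of four linear factors with distinct roots is simple -/
lemma aux_simple {k : Type*} [Field k] (a b c d x : k) (h1 : a ≠ b) (h2 : a ≠ c) (h3 : a ≠ d)
    (h4 : b ≠ c) (h5 : b ≠ d) (h6 : c ≠ d)
    (h : (x - a) * (x - b) * (x - c) * (x - d) = 0)
    (h' : (x - b) * (x - c) * (x - d) + (x - a) * (x - c) * (x - d) + (x - a) * (x - b) * (x - d)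
      + (x - a) * (x - b) * (x - c) = 0) : False := by
  simp only [mul_eq_zero, sub_eq_zero] at h
  rcases h with ((h | h) | h) | h <;> subst h <;> simp [sub_eq_zero] at h' <;> grind

lemma aux_hom {k : Type*} [Field k] (F : MvPolynomial (Fin 3) k) (n : ℕ) (hF : F.IsHomogeneous n)
    (c : k) (w : Fin 3 → k) : eval (fun i => c * w i) F = c ^ n * eval w F := by
  rw [eval_eq', eval_eq', Finset.mul_sum]
  apply Finset.sum_congr rfl
  intro d hd
  have h := hF (mem_support_iff.1 hd)
  have h' : d 0 + d 1 + d 2 = n := by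
    rw [← h]
    simp [Finsupp.weight_apply, Finsupp.sum_fintype, Fin.sum_univ_three]
  rw [← h']
  simp only [Fin.prod_univ_three]
  ring

set_option maxHeartbeats 2000000 in
/-- Case (I-1): if σ1 ≠ τ1 and Res_x(h1, h1') ≠ 0, then h1 has exactly 3
distinct roots ξ1, ξ2, ξ3 and Sing = {(0:1:0), (ξ1:0:1), (ξ2:0:1), (ξ3:0:1)}
has exactly 4 elements. -/
theorem stmt_12
    {k : Type*} [Field k] [IsAlgClosed k]
    (p : ℕ) [CharP k p] (hp : p = 0 ∨ 5 ≤ p)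
    (α1 α2 α3 α4 β1 β2 β3 β4 : k)
    (hdist : ([α1, α2, α3, α4, β1, β2, β3, β4] : List k).Pairwise (· ≠ ·))
    (σ1 σ2 σ3 σ4 τ1 τ2 τ3 τ4 : k)
    (hσ1 : σ1 = α1 + α2 + α3 + α4)
    (hσ2 : σ2 = α1 * α2 + α1 * α3 + α1 * α4 + α2 * α3 + α2 * α4 + α3 * α4)
    (hσ3 : σ3 = α1 * α2 * α3 + α1 * α2 * α4 + α1 * α3 * α4 + α2 * α3 * α4)
    (hσ4 : σ4 = α1 * α2 * α3 * α4)
    (hτ1 : τ1 = β1 + β2 + β3 + β4)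
    (hτ2 : τ2 = β1 * β2 + β1 * β3 + β1 * β4 + β2 * β3 + β2 * β4 + β3 * β4)
    (hτ3 : τ3 = β1 * β2 * β3 + β1 * β2 * β4 + β1 * β3 * β4 + β2 * β3 * β4)
    (hτ4 : τ4 = β1 * β2 * β3 * β4)
    (φ1 φ2 f : MvPolynomial (Fin 2) k)
    (hφ1 : φ1 = (X 0 - C α1) * (X 0 - C α2) * (X 0 - C α3) * (X 0 - C α4))
    (hφ2 : φ2 = (X 0 - C β1) * (X 0 - C β2) * (X 0 - C β3) * (X 0 - C β4))
    (hf : f = X 1 ^ 4 - C 2 * (φ1 + φ2) * X 1 ^ 2 + (φ1 - φ2) ^ 2)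
    (F : MvPolynomial (Fin 3) k)
    (hFhom : F.IsHomogeneous 6)
    (hFf : aeval ![(X 0 : MvPolynomial (Fin 2) k), X 1, 1] F = f)
    (Sing : Set (Projectivization k (Fin 3 → k)))
    (hSing : ∀ P : Projectivization k (Fin 3 → k),
      P ∈ Sing ↔ (eval P.rep F = 0 ∧
        eval P.rep (pderiv 0 F) = 0 ∧
        eval P.rep (pderiv 1 F) = 0 ∧
        eval P.rep (pderiv 2 F) = 0))
    (h1 : k → k)
    (hh1 : ∀ x : k, h1 x = (σ1 - τ1) * x ^ 3 - (σ2 - τ2) * x ^ 2 + (σ3 - τ3) * x - (σ4 - τ4))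
    -- res1 = Res_x(h1, h1'), the determinant of the Sylvester matrix of the
    -- cubic h1 and its derivative h1'
    (res1 : k)
    (hres1 : res1 = Matrix.det
      !![σ1 - τ1, -(σ2 - τ2), σ3 - τ3, -(σ4 - τ4), 0;
         0, σ1 - τ1, -(σ2 - τ2), σ3 - τ3, -(σ4 - τ4);
         3 * (σ1 - τ1), -2 * (σ2 - τ2), σ3 - τ3, 0, 0;
         0, 3 * (σ1 - τ1), -2 * (σ2 - τ2), σ3 - τ3, 0;
         0, 0, 3 * (σ1 - τ1), -2 * (σ2 - τ2), σ3 - τ3])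
    (hστ : σ1 ≠ τ1) (hr1 : res1 ≠ 0) :
    ∃ ξ1 ξ2 ξ3 : k, ξ1 ≠ ξ2 ∧ ξ1 ≠ ξ3 ∧ ξ2 ≠ ξ3
      ∧ (∀ x : k, h1 x = 0 ↔ x = ξ1 ∨ x = ξ2 ∨ x = ξ3)
      ∧ Sing = {Projectivization.mk k (![0, 1, 0] : Fin 3 → k)
                  (by intro hc; simpa using congrFun hc 1),
                Projectivization.mk k (![ξ1, 0, 1] : Fin 3 → k)
                  (by intro hc; simpa using congrFun hc 2),
                Projectivization.mk k (![ξ2, 0, 1] : Fin 3 → k)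
                  (by intro hc; simpa using congrFun hc 2),
                Projectivization.mk k (![ξ3, 0, 1] : Fin 3 → k)
                  (by intro hc; simpa using congrFun hc 2)}
      ∧ Sing.ncard = 4 := by
  have h2 : (2 : k) ≠ 0 := by
    intro h
    have : ((2 : ℕ) : k) = 0 := by exact_mod_cast h
    rw [CharP.cast_eq_zero_iff k p] at this
    rcases hp with rfl | hp
    · simp at this
    · have := Nat.le_of_dvd (by norm_num) this
      omega
  have hd : σ1 - τ1 ≠ 0 := sub_ne_zero.mpr hστ
  have hFG : F = auxG (σ1 + τ1) (σ2 + τ2) (σ3 + τ3) (σ4 + τ4)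
      (σ1 - τ1) (σ2 - τ2) (σ3 - τ3) (σ4 - τ4) := by
    have : Infinite k := IsAlgClosed.instInfinite
    suffices h : F * X 2 = auxG (σ1 + τ1) (σ2 + τ2) (σ3 + τ3) (σ4 + τ4)
      (σ1 - τ1) (σ2 - τ2) (σ3 - τ3) (σ4 - τ4) * X 2 from mul_right_cancel₀ (X_ne_zero 2) h
    apply MvPolynomial.funext
    intro v
    rw [map_mul, map_mul, eval_X]
    by_cases hz : v 2 = 0
    · simp [hz]
    congr 1
    have e1 : eval v F = v 2 ^ 6 * eval ![v 0 / v 2, v 1 / v 2, 1] F := by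
      rw [← aux_hom F 6 hFhom]
      congr 2
      funext i
      fin_cases i <;> simp <;> field_simp
    have e2 : eval ![v 0 / v 2, v 1 / v 2, 1] F = eval ![v 0 / v 2, v 1 / v 2] f := by
      rw [← hFf, ← MvPolynomial.coe_aeval_eq_eval, ← MvPolynomial.coe_aeval_eq_eval]
      change aeval _ F = ((aeval ![v 0 / v 2, v 1 / v 2]).comp (aeval ![X 0, X 1, 1])) F
      congr 1
      apply MvPolynomial.algHom_ext
      intro i
      fin_cases i <;> simp
    rw [e1, e2, auxG_eval, hf, hφ1, hφ2]
    simp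
    subst hσ1 hσ2 hσ3 hσ4 hτ1 hτ2 hτ3 hτ4
    field_simp
    ring
  obtain ⟨ξ1, ξ2, ξ3, r1, r2, r3⟩ := aux_cubic (σ1 - τ1) (-(σ2 - τ2)) (σ3 - τ3) (-(σ4 - τ4)) hd
  have hfac : ∀ x, h1 x = (σ1 - τ1) * ((x - ξ1) * (x - ξ2) * (x - ξ3)) := by
    intro x
    rw [hh1]
    linear_combination x ^ 2 * r1 + x * r2 + r3
  have hroot : ∀ x, h1 x = 0 ↔ x = ξ1 ∨ x = ξ2 ∨ x = ξ3 := by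
    intro x
    rw [hfac]
    simp [hd, sub_eq_zero, or_assoc]
  have hcommon : ∀ r : k, h1 r = 0 →
      3 * (σ1 - τ1) * r ^ 2 - 2 * (σ2 - τ2) * r + (σ3 - τ3) = 0 → False := by
    intro r ha hb
    rw [hh1] at ha
    apply hr1
    rw [hres1, ← Matrix.exists_mulVec_eq_zero_iff]
    refine ⟨![r ^ 4, r ^ 3, r ^ 2, r, 1], fun hc => by simpa using congrFun hc 4, ?_⟩
    funext i
    fin_cases i <;> simp [Matrix.mulVec, dotProduct, Fin.sum_univ_succ]
    · linear_combination r * ha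
    · linear_combination ha
    · linear_combination r ^ 2 * hb
    · linear_combination r * hb
    · linear_combination hb
  have n12 : ξ1 ≠ ξ2 := by
    rintro rfl
    refine hcommon ξ1 ((hroot _).2 (by simp)) ?_
    linear_combination 2 * ξ1 * r1 + r2
  have n13 : ξ1 ≠ ξ3 := by
    rintro rfl
    refine hcommon ξ1 ((hroot _).2 (by simp)) ?_
    linear_combination 2 * ξ1 * r1 + r2
  have n23 : ξ2 ≠ ξ3 := by
    rintro rfl
    refine hcommon ξ2 ((hroot _).2 (by simp)) ?_
    linear_combination 2 * ξ2 * r1 + r2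
  have hbad : ∀ x y : k, y ≠ 0 →
      y ^ 2 = 2 * x ^ 4 - (σ1 + τ1) * x ^ 3 + (σ2 + τ2) * x ^ 2 - (σ3 + τ3) * x + (σ4 + τ4) →
      y ^ 4 - 2 * (2 * x ^ 4 - (σ1 + τ1) * x ^ 3 + (σ2 + τ2) * x ^ 2 - (σ3 + τ3) * x + (σ4 + τ4))
        * y ^ 2 + (h1 x) ^ 2 = 0 →
      - 2 * (8 * x ^ 3 - 3 * (σ1 + τ1) * x ^ 2 + 2 * (σ2 + τ2) * x - (σ3 + τ3)) * y ^ 2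
        + 2 * h1 x * (3 * (σ1 - τ1) * x ^ 2 - 2 * (σ2 - τ2) * x + (σ3 - τ3)) = 0 → False := by
    intro x y hy a b c
    obtain ⟨A, hA⟩ : ∃ A, A = (x - α1) * (x - α2) * (x - α3) * (x - α4) := ⟨_, rfl⟩
    obtain ⟨B, hB⟩ : ∃ B, B = (x - β1) * (x - β2) * (x - β3) * (x - β4) := ⟨_, rfl⟩
    obtain ⟨A', hA'⟩ : ∃ A', A' = (x - α2) * (x - α3) * (x - α4) + (x - α1) * (x - α3) * (x - α4)
      + (x - α1) * (x - α2) * (x - α4) + (x - α1) * (x - α2) * (x - α3) := ⟨_, rfl⟩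
    obtain ⟨B', hB'⟩ : ∃ B', B' = (x - β2) * (x - β3) * (x - β4) + (x - β1) * (x - β3) * (x - β4)
      + (x - β1) * (x - β2) * (x - β4) + (x - β1) * (x - β2) * (x - β3) := ⟨_, rfl⟩
    have s0 : 2 * x ^ 4 - (σ1 + τ1) * x ^ 3 + (σ2 + τ2) * x ^ 2 - (σ3 + τ3) * x + (σ4 + τ4)
        = A + B := by
      subst hσ1 hσ2 hσ3 hσ4 hτ1 hτ2 hτ3 hτ4 hA hB; ring
    have s1 : h1 x = B - A := by
      rw [hh1]; subst hσ1 hσ2 hσ3 hσ4 hτ1 hτ2 hτ3 hτ4 hA hB; ring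
    have s2 : 8 * x ^ 3 - 3 * (σ1 + τ1) * x ^ 2 + 2 * (σ2 + τ2) * x - (σ3 + τ3) = A' + B' := by
      subst hσ1 hσ2 hσ3 hσ4 hτ1 hτ2 hτ3 hτ4 hA' hB'; ring
    have s3 : 3 * (σ1 - τ1) * x ^ 2 - 2 * (σ2 - τ2) * x + (σ3 - τ3) = B' - A' := by
      subst hσ1 hσ2 hσ3 hσ4 hτ1 hτ2 hτ3 hτ4 hA' hB'; ring
    rw [s0] at a b
    rw [s1] at b c
    rw [s2, s3, a] at c
    have hAB : A + B ≠ 0 := a ▸ pow_ne_zero 2 hy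
    have h4 : (4 : k) ≠ 0 := by
      have := mul_ne_zero h2 h2
      norm_num at this
      exact this
    have b' : A * B = 0 := by
      have : 4 * (A * B) = 0 := by linear_combination -b + (y ^ 2 - (A + B)) * a
      simpa [h4] using this
    simp only [List.pairwise_cons, List.mem_cons, List.not_mem_nil, forall_eq_or_imp,
      or_false, forall_eq] at hdist
    obtain ⟨⟨a12, a13, a14, -⟩, ⟨a23, a24, -⟩, ⟨a34, -⟩, -, ⟨b12, b13, b14⟩, ⟨b23, b24⟩,
      b34, -⟩ := hdist
    rcases mul_eq_zero.1 b' with h | h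
    · rw [h, zero_add] at hAB
      have : A' = 0 := by
        have : (4 * B) * A' = 0 := by rw [h] at c; linear_combination -c
        simpa [h4, hAB] using this
      exact aux_simple α1 α2 α3 α4 x a12 a13 a14 a23 a24 a34 (hA ▸ h) (hA' ▸ this)
    · rw [h, add_zero] at hAB
      have : B' = 0 := by
        have : (4 * A) * B' = 0 := by rw [h] at c; linear_combination -c
        simpa [h4, hAB] using this
      exact aux_simple β1 β2 β3 β4 x b12 b13 b14 b23 b24 b34 (hB ▸ h) (hB' ▸ this)
  have hS : Sing = {Projectivization.mk k (![0, 1, 0] : Fin 3 → k)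
                  (by intro hc; simpa using congrFun hc 1),
                Projectivization.mk k (![ξ1, 0, 1] : Fin 3 → k)
                  (by intro hc; simpa using congrFun hc 2),
                Projectivization.mk k (![ξ2, 0, 1] : Fin 3 → k)
                  (by intro hc; simpa using congrFun hc 2),
                Projectivization.mk k (![ξ3, 0, 1] : Fin 3 → k)
                  (by intro hc; simpa using congrFun hc 2)} := by
    ext P
    have key : ∀ (w : Fin 3 → k) (hw : w ≠ 0), P = Projectivization.mk k w hw ↔
        ∃ a : k, a • w = P.rep := by
      intro w hw
      conv_lhs => rw [← P.mk_rep]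
      exact Projectivization.mk_eq_mk_iff' k _ _ _ _
    have hv0 := P.rep_nonzero
    rw [hSing, hFG, auxG_eval, auxG_eval0, auxG_eval1, auxG_eval2]
    simp only [Set.mem_insert_iff, Set.mem_singleton_iff, key]
    generalize P.rep = v at *
    have back : ∀ r, h1 r = 0 → (∃ a : k, a • ![r, 0, 1] = v) → v 1 = 0 ∧
        (σ1 - τ1) * v 0 ^ 3 - (σ2 - τ2) * v 0 ^ 2 * v 2 + (σ3 - τ3) * v 0 * v 2 ^ 2
          - (σ4 - τ4) * v 2 ^ 3 = 0 := by
      rintro r hr ⟨a, rfl⟩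
      rw [hh1] at hr
      simp
      linear_combination a ^ 3 * hr
    constructor
    · rintro ⟨g, g0, g1, -⟩
      by_cases hz : v 2 = 0
      · left
        simp only [hz] at g g1
        have hx : v 0 = 0 := by
          by_contra hx
          have hy : v 1 = 0 := by
            have : (2 * 2 * 2 * v 0 ^ 4) * v 1 = 0 := by linear_combination -g1
            simpa [h2, hx] using this
          rw [hy] at g
          have : (σ1 - τ1) ^ 2 * v 0 ^ 6 = 0 := by linear_combination g
          simp [hd, hx] at this
        refine ⟨v 1, ?_⟩
        funext i
        fin_cases i <;> simp [hx, hz]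
      · right
        obtain ⟨t, ht⟩ : ∃ t, v 0 = t * v 2 := ⟨v 0 / v 2, by field_simp⟩
        obtain ⟨s, hs⟩ : ∃ s, v 1 = s * v 2 := ⟨v 1 / v 2, by field_simp⟩
        rw [ht, hs] at g g0 g1
        have g' : s ^ 4 - 2 * (2 * t ^ 4 - (σ1 + τ1) * t ^ 3 + (σ2 + τ2) * t ^ 2 - (σ3 + τ3) * t
            + (σ4 + τ4)) * s ^ 2 + (h1 t) ^ 2 = 0 := by
          apply (mul_eq_zero.1 (?_ : v 2 ^ 6 * _ = 0)).resolve_left (pow_ne_zero _ hz)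
          rw [hh1]; linear_combination g
        have g0' : - 2 * (8 * t ^ 3 - 3 * (σ1 + τ1) * t ^ 2 + 2 * (σ2 + τ2) * t - (σ3 + τ3)) * s ^ 2
            + 2 * h1 t * (3 * (σ1 - τ1) * t ^ 2 - 2 * (σ2 - τ2) * t + (σ3 - τ3)) = 0 := by
          apply (mul_eq_zero.1 (?_ : v 2 ^ 5 * _ = 0)).resolve_left (pow_ne_zero _ hz)
          rw [hh1]; linear_combination g0
        have g1' : s * (s ^ 2 - (2 * t ^ 4 - (σ1 + τ1) * t ^ 3 + (σ2 + τ2) * t ^ 2 - (σ3 + τ3) * t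
            + (σ4 + τ4))) = 0 := by
          apply (mul_eq_zero.1 (?_ : (2 * 2 * v 2 ^ 5) * _ = 0)).resolve_left
            (mul_ne_zero (mul_ne_zero h2 h2) (pow_ne_zero _ hz))
          linear_combination g1
        have hs0 : s = 0 := by
          by_contra hs0
          exact hbad t s hs0 (sub_eq_zero.1 ((mul_eq_zero.1 g1').resolve_left hs0)) g' g0'
        have ht0 : h1 t = 0 := by
          rw [hs0] at g'
          simpa using g'
        have hv : v 2 • ![t, 0, 1] = v := by
          funext i
          fin_cases i <;> simp [ht, hs, hs0, mul_comm]
        rcases (hroot t).1 ht0 with rfl | rfl | rfl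
        · exact Or.inl ⟨_, hv⟩
        · exact Or.inr (Or.inl ⟨_, hv⟩)
        · exact Or.inr (Or.inr ⟨_, hv⟩)
    · rintro (⟨a, rfl⟩ | h)
      · simp
      · have : v 1 = 0 ∧
            (σ1 - τ1) * v 0 ^ 3 - (σ2 - τ2) * v 0 ^ 2 * v 2 + (σ3 - τ3) * v 0 * v 2 ^ 2
            - (σ4 - τ4) * v 2 ^ 3 = 0 := by
          rcases h with h | h | h
          · exact back _ ((hroot _).2 (by simp)) h
          · exact back _ ((hroot _).2 (by simp)) h
          · exact back _ ((hroot _).2 (by simp)) h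
        obtain ⟨hy, hH⟩ := this
        rw [hy, hH]
        simp
  refine ⟨ξ1, ξ2, ξ3, n12, n13, n23, hroot, hS, ?_⟩
  have hinj : ∀ (r s : k) (hr : (![r, 0, 1] : Fin 3 → k) ≠ 0) (hs : (![s, 0, 1] : Fin 3 → k) ≠ 0),
      r ≠ s → Projectivization.mk k _ hr ≠ Projectivization.mk k _ hs := by
    intro r s hr hs hne h
    rw [Projectivization.mk_eq_mk_iff'] at h
    obtain ⟨a, ha⟩ := h
    have h0 := congrFun ha 0
    have h2 := congrFun ha 2
    simp at h0 h2
    rw [h2, one_mul] at h0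
    exact hne h0.symm
  have hinf : ∀ (r : k) (hr : (![0, 1, 0] : Fin 3 → k) ≠ 0) (hs : (![r, 0, 1] : Fin 3 → k) ≠ 0),
      Projectivization.mk k _ hr ≠ Projectivization.mk k _ hs := by
    intro r hr hs h
    rw [Projectivization.mk_eq_mk_iff'] at h
    obtain ⟨a, ha⟩ := h
    have h1 := congrFun ha 1
    simp at h1
  rw [hS, Set.ncard_insert_of_notMem, Set.ncard_insert_of_notMem, Set.ncard_pair]
  · exact hinj _ _ _ _ n23
  · simp only [Set.mem_insert_iff, Set.mem_singleton_iff, not_or]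
    exact ⟨hinj _ _ _ _ n12, hinj _ _ _ _ n13⟩
  · simp only [Set.mem_insert_iff, Set.mem_singleton_iff, not_or]
    exact ⟨hinf _ _ _, hinf _ _ _, hinf _ _ _⟩
end

section
/- Assume σ1 ≠ τ1. Then the projective curve F = 0 has a unique singular point of the form (x:0:1) if and only if Res_x(h1, h1′) = 0 and Res_x(h1′, h1″) = 0; in that case this unique affine singular point is (ξ:0:1) with ξ = (σ2−τ2)/(3(σ1−τ1)), and Sing = {(0:1:0), (ξ:0:1)} has exactly 2 elements. -/
open MvPolynomial

namespace Aux14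
variable {k : Type*} [Field k]

lemma pt (h2 : (2:k) ≠ 0) (a1 a2 a3 a4 b1 b2 b3 b4 x y z : k) (hd : ([a1, a2, a3, a4, b1, b2, b3, b4] : List k).Pairwise (· ≠ ·))
  (A B Ax Bx Az Bz H Hx Hz s c2 c3 c4 : k)
  (hA : A = (x - a1*z)*(x-a2*z)*(x-a3*z)*(x-a4*z))
  (hB : B = (x - b1*z)*(x-b2*z)*(x-b3*z)*(x-b4*z))
  (hAx : Ax = (x-a2*z)*(x-a3*z)*(x-a4*z) + (x - a1*z)*(x-a3*z)*(x-a4*z)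
     + (x - a1*z)*(x-a2*z)*(x-a4*z) + (x - a1*z)*(x-a2*z)*(x-a3*z))
  (hBx : Bx = (x-b2*z)*(x-b3*z)*(x-b4*z) + (x - b1*z)*(x-b3*z)*(x-b4*z)
     + (x - b1*z)*(x-b2*z)*(x-b4*z) + (x - b1*z)*(x-b2*z)*(x-b3*z))
  (hAz : x = 0 → z = 0 → Az = 0) (hBz : x = 0 → z = 0 → Bz = 0)
  (hs : s ≠ 0)
  (hH : H = s*x^3 - c2*x^2*z + c3*x*z^2 - c4*z^3)
  (hzH : z * H = B - A) (hzHx : z * Hx = Bx - Ax) :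
  (y^4*z^2 - 2*(A+B)*y^2 + H^2 = 0 ∧ -2*(Ax+Bx)*y^2 + 2*H*Hx = 0 ∧ 4*y^3*z^2 - 4*(A+B)*y = 0
    ∧ 2*y^4*z - 2*(Az+Bz)*y^2 + 2*H*Hz = 0) ↔
   (z = 0 ∧ x = 0) ∨ (z ≠ 0 ∧ y = 0 ∧ H = 0) := by
  simp only [List.pairwise_cons, List.mem_cons, List.not_mem_nil, or_false, forall_eq_or_imp, forall_eq] at hd
  obtain ⟨⟨d12, d13, d14, -⟩, ⟨d23, d24, -⟩, ⟨d34, -⟩, -, ⟨e12, e13, e14⟩, ⟨e23, e24⟩, e34, -⟩ := hd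
  have h4 : (4:k) ≠ 0 := by
    have : (4:k) = 2*2 := by norm_num
    rw [this]; exact mul_ne_zero h2 h2
  constructor
  · rintro ⟨q0, q1, q2, q3⟩
    by_cases hz : z = 0
    · left
      refine ⟨hz, ?_⟩
      subst hz
      by_contra hx
      have hy : y = 0 := by
        have : 4*2*x^4*y = 0 := by rw [hA, hB] at q2; linear_combination -q2
        simpa [h4, h2, hx] using this
      subst hy
      have : (s*x^3)^2 = 0 := by rw [hH] at q0; linear_combination q0
      simp [hs, hx] at this
    · right
      refine ⟨hz, ?_⟩
      by_cases hy : y = 0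
      · subst hy
        refine ⟨rfl, ?_⟩
        have : H^2 = 0 := by linear_combination q0
        simpa using this
      exfalso
      have r2 : y^2*z^2 = A + B := by
        have : 4*y*(y^2*z^2 - (A+B)) = 0 := by linear_combination q2
        have := (mul_eq_zero.1 this).resolve_left (mul_ne_zero h4 hy)
        linear_combination this
      have r0 : A * B = 0 := by
        have : 4 * (A*B) = 0 := by
          linear_combination (-z^2)*q0 + (z*H + B - A)*hzH + (y^2*z^2 -(A+B))*r2
        exact (mul_eq_zero.1 this).resolve_left h4
      have r1 : -2*(Ax+Bx)*(A+B) + 2*(B-A)*(Bx-Ax) = 0 := by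
        linear_combination z^2*q1 + 2*(Ax+Bx)*r2 - 2*z*Hx*hzH - 2*(B-A)*hzHx
      have hAB : A + B ≠ 0 := by
        rw [← r2]; exact mul_ne_zero (pow_ne_zero _ hy) (pow_ne_zero _ hz)
      rcases mul_eq_zero.1 r0 with h | h
      · have : Ax = 0 := by
          have : 4 * ((A+B)*Ax) = 0 := by
            linear_combination (-1)*r1 + 4*(Ax - Bx)*h
          simpa [h4, hAB] using this
        rw [hAx] at this
        rw [hA] at h
        simp only [mul_eq_zero] at h
        rcases h with ((h|h)|h)|h <;> 
        · have hx := sub_eq_zero.1 h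
          subst hx
          simp [← sub_mul, hz, sub_eq_zero, *, Ne.symm] at this
          try simp_all [eq_comm]
      · have : Bx = 0 := by
          have : 4 * ((A+B)*Bx) = 0 := by
            linear_combination (-1)*r1 + 4*(Bx - Ax)*h
          simpa [h4, hAB] using this
        rw [hBx] at this
        rw [hB] at h
        simp only [mul_eq_zero] at h
        rcases h with ((h|h)|h)|h <;> 
        · have hx := sub_eq_zero.1 h
          subst hx
          simp [← sub_mul, hz, sub_eq_zero, *, Ne.symm] at this
          try simp_all [eq_comm]
  · rintro (⟨hz, hx⟩ | ⟨hz, hy, h⟩)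
    · have := hAz hx hz
      have := hBz hx hz
      subst hz hx
      simp_all
    · subst hy; rw [h]; simp

lemma homog_eval {F : MvPolynomial (Fin 3) k} {n : ℕ} (h : F.IsHomogeneous n) (u : k) (v : Fin 3 → k) :
    eval (u • v) F = u ^ n * eval v F := by
  rw [eval_eq', eval_eq', Finset.mul_sum]
  refine Finset.sum_congr rfl fun d hd => ?_
  have := h (mem_support_iff.1 hd)
  rw [Finsupp.weight_apply, Finsupp.sum_fintype _ _ (by simp)] at this
  simp only [Pi.smul_apply, smul_eq_mul, mul_pow, Finset.prod_mul_distrib, Finset.prod_pow_eq_pow_sum]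
  simp at this
  rw [this]; ring

lemma roots (h2 : (2:k) ≠ 0) (h3 : (3:k) ≠ 0) [IsAlgClosed k] (s c2 c3 c4 r1 r2 : k) (hs : s ≠ 0)
    (hr1 : r1 = Matrix.det
      !![s, -c2, c3, -c4, 0;
         0, s, -c2, c3, -c4;
         3 * s, -2 * c2, c3, 0, 0;
         0, 3 * s, -2 * c2, c3, 0;
         0, 0, 3 * s, -2 * c2, c3])
    (hr2 : r2 = Matrix.det
      !![3 * s, -2 * c2, c3;
         6 * s, -2 * c2, 0;
         0, 6 * s, -2 * c2]) :
    ((∃! x : k, s*x^3 - c2*x^2 + c3*x - c4 = 0) ↔ (r1 = 0 ∧ r2 = 0)) ∧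
    (r1 = 0 → r2 = 0 → ∀ x : k, s*x^3 - c2*x^2 + c3*x - c4 = 0 ↔ x = c2 / (3*s)) := by
  have e2 : r2 = 12 * s * (3*s*c3 - c2^2) := by
    rw [hr2, Matrix.det_fin_three]; simp; ring
  have e1 : r1 = s * (27*s^2*c4^2 - 18*s*c2*c3*c4+4*c2^3*c4+4*s*c3^3-c2^2*c3^2) := by
    rw [hr1]; simp [Matrix.det_succ_row_zero, Fin.sum_univ_succ, Fin.succAbove]; ring
  have key : r1 = 0 → r2 = 0 → ∀ x : k, s*x^3 - c2*x^2 + c3*x - c4 = 0 ↔ x = c2 / (3*s) := by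
    intro z1 z2 x
    have h12 : (12:k) ≠ 0 := by
      have : (12:k) = 2*2*3 := by norm_num
      rw [this]; simp [h2, h3]
    have g2 : 3*s*c3 - c2^2 = 0 := by
      rw [e2] at z2; simpa [h12, hs] using z2
    have g1 : 27*s^2*c4^2 - 18*s*c2*c3*c4+4*c2^3*c4+4*s*c3^3-c2^2*c3^2 = 0 := by
      rw [e1] at z1; simpa [hs] using z1
    obtain ⟨t, ht⟩ : ∃ t, c2 = 3*s*t := ⟨c2/(3*s), by field_simp⟩
    have hc3 : c3 = 3*s*t^2 := by
      subst ht
      have : (3*s)*(c3 - 3*s*t^2) = 0 := by linear_combination g2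
      have := (mul_eq_zero.1 this).resolve_left (by simp [h3, hs])
      linear_combination this
    have hc4 : c4 = s*t^3 := by
      subst ht; subst hc3
      have : (3*(3*(3*s^2)))*(c4 - s*t^3)^2 = 0 := by linear_combination g1
      have := (mul_eq_zero.1 this).resolve_left (by simp [h3, hs])
      have := pow_eq_zero_iff (two_ne_zero) |>.1 this
      linear_combination this
    have ht' : c2/(3*s) = t := by rw [ht]; field_simp
    rw [ht', hc4, hc3, ht]
    constructor
    · intro h
      have : s*(x-t)^3 = 0 := by linear_combination h
      have := (mul_eq_zero.1 this).resolve_left hs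
      have := pow_eq_zero_iff (three_ne_zero) |>.1 this
      linear_combination this
    · rintro rfl; ring
  refine ⟨⟨?_, ?_⟩, key⟩
  · rintro ⟨t, ht, hu⟩
    simp only at ht hu
    -- quotient s x^2 + (s t - c2) x + (s t^2 - c2 t + c3)
    have hdisc : ∃ w : k, w^2 = (s*t-c2)^2 - 4*s*(s*t^2-c2*t+c3) := by
      obtain ⟨w, hw⟩ := IsAlgClosed.exists_pow_nat_eq ((s*t-c2)^2 - 4*s*(s*t^2-c2*t+c3)) (n := 2) (by norm_num)
      exact ⟨w, hw⟩
    obtain ⟨w, hw⟩ := hdisc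
    obtain ⟨v, hv⟩ : ∃ v, w = 2*s*v := ⟨w/(2*s), by field_simp⟩
    obtain ⟨m, hm⟩ : ∃ m, s*t-c2 = -(2*s*m) := ⟨-(s*t-c2)/(2*s), by field_simp⟩
    have hc2 : c2 = s*t+2*s*m := by linear_combination -hm
    have hq : c3 = s*(m^2-v^2) - s*t^2+c2*t := by
      have : (2*(2*s))*(c3 - (s*(m^2-v^2) - s*t^2+c2*t)) = 0 := by
        subst hv
        linear_combination hw + (s*t-c2-2*s*m)*hm
      have := (mul_eq_zero.1 this).resolve_left (by simp [h2, hs])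
      linear_combination this
    have hc4 : c4 = s*t^3 - c2*t^2+c3*t := by linear_combination -ht
    have u1 := hu (m+v) (by rw [hc4, hq, hc2]; ring)
    have u2 := hu (m-v) (by rw [hc4, hq, hc2]; ring)
    have hv0 : v = 0 := by
      have : 2*v = 0 := by linear_combination u1-u2
      simpa [h2] using this
    subst hv0
    have : m = t := by linear_combination u1
    subst this
    rw [e1, e2, hc4, hq, hc2]
    constructor <;> ring
  · rintro ⟨z1, z2⟩
    exact ⟨c2/(3*s), (key z1 z2 _).2 rfl, fun y hy => (key z1 z2 y).1 hy⟩

/-- The explicit degree-6 homogenization. -/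
noncomputable def G (a1 a2 a3 a4 b1 b2 b3 b4 s c2 c3 c4 : k) : MvPolynomial (Fin 3) k :=
  X 1 ^ 4 * X 2 ^ 2 - C 2 * ((X 0 - C a1 * X 2) * (X 0 - C a2 * X 2) * (X 0 - C a3 * X 2) * (X 0 - C a4 * X 2)
    + (X 0 - C b1 * X 2) * (X 0 - C b2 * X 2) * (X 0 - C b3 * X 2) * (X 0 - C b4 * X 2)) * X 1 ^ 2
    + (C s * X 0 ^ 3 - C c2 * X 0 ^ 2 * X 2 + C c3 * X 0 * X 2 ^ 2 - C c4 * X 2 ^ 3) ^ 2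

lemma F_eq [Infinite k] (α1 α2 α3 α4 β1 β2 β3 β4 : k) (F : MvPolynomial (Fin 3) k)
    (hF : F.IsHomogeneous 6)
    (hf : aeval ![(X 0 : MvPolynomial (Fin 2) k), X 1, 1] F =
      X 1 ^ 4 - C 2 * ((X 0 - C α1) * (X 0 - C α2) * (X 0 - C α3) * (X 0 - C α4)
        + (X 0 - C β1) * (X 0 - C β2) * (X 0 - C β3) * (X 0 - C β4)) * X 1 ^ 2
      + ((X 0 - C α1) * (X 0 - C α2) * (X 0 - C α3) * (X 0 - C α4)
        - (X 0 - C β1) * (X 0 - C β2) * (X 0 - C β3) * (X 0 - C β4)) ^ 2) :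
    F = G α1 α2 α3 α4 β1 β2 β3 β4
      ((α1 + α2 + α3 + α4) - (β1 + β2 + β3 + β4))
      ((α1 * α2 + α1 * α3 + α1 * α4 + α2 * α3 + α2 * α4 + α3 * α4)
        - (β1 * β2 + β1 * β3 + β1 * β4 + β2 * β3 + β2 * β4 + β3 * β4))
      ((α1 * α2 * α3 + α1 * α2 * α4 + α1 * α3 * α4 + α2 * α3 * α4)
        - (β1 * β2 * β3 + β1 * β2 * β4 + β1 * β3 * β4 + β2 * β3 * β4))
      (α1 * α2 * α3 * α4 - β1 * β2 * β3 * β4) := by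
  have hX : (X 2 : MvPolynomial (Fin 3) k) ≠ 0 := X_ne_zero 2
  apply mul_left_cancel₀ hX
  apply MvPolynomial.funext
  intro v
  rw [map_mul, map_mul, eval_X]
  by_cases hz : v 2 = 0
  · simp [hz]
  congr 1
  have hv : v = v 2 • ![v 0 / v 2, v 1 / v 2, 1] := by
    ext i; fin_cases i <;> simp <;> field_simp
  have key : ∀ x y : k, eval ![x, y, 1] F = eval ![x, y]
      (aeval ![(X 0 : MvPolynomial (Fin 2) k), X 1, 1] F) := by
    intro x y
    have : (eval ![x, y] : MvPolynomial (Fin 2) k →+* k).comp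
        (aeval ![(X 0 : MvPolynomial (Fin 2) k), X 1, 1] :
          MvPolynomial (Fin 3) k →ₐ[k] MvPolynomial (Fin 2) k).toRingHom = eval ![x, y, 1] := by
      apply MvPolynomial.ringHom_ext
      · intro r; simp
      · intro i; fin_cases i <;> simp
    exact (RingHom.congr_fun this F).symm
  conv_lhs => rw [hv]
  rw [homog_eval hF, key, hf]
  simp [G]
  field_simp
  ring
end Aux14

/-- Case (I-3): for σ1 ≠ τ1, the curve F = 0 has a unique singular point of
the form (x:0:1) iff Res_x(h1, h1') = 0 and Res_x(h1', h1'') = 0; in that case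
the unique such point is (ξ:0:1) with ξ = (σ2-τ2)/(3(σ1-τ1)), and
Sing = {(0:1:0), (ξ:0:1)} has exactly 2 elements. -/
theorem stmt_14
    {k : Type*} [Field k] [IsAlgClosed k]
    (p : ℕ) [CharP k p] (hp : p = 0 ∨ 5 ≤ p)
    (α1 α2 α3 α4 β1 β2 β3 β4 : k)
    (hdist : ([α1, α2, α3, α4, β1, β2, β3, β4] : List k).Pairwise (· ≠ ·))
    (σ1 σ2 σ3 σ4 τ1 τ2 τ3 τ4 : k)
    (hσ1 : σ1 = α1 + α2 + α3 + α4)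
    (hσ2 : σ2 = α1 * α2 + α1 * α3 + α1 * α4 + α2 * α3 + α2 * α4 + α3 * α4)
    (hσ3 : σ3 = α1 * α2 * α3 + α1 * α2 * α4 + α1 * α3 * α4 + α2 * α3 * α4)
    (hσ4 : σ4 = α1 * α2 * α3 * α4)
    (hτ1 : τ1 = β1 + β2 + β3 + β4)
    (hτ2 : τ2 = β1 * β2 + β1 * β3 + β1 * β4 + β2 * β3 + β2 * β4 + β3 * β4)
    (hτ3 : τ3 = β1 * β2 * β3 + β1 * β2 * β4 + β1 * β3 * β4 + β2 * β3 * β4)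
    (hτ4 : τ4 = β1 * β2 * β3 * β4)
    (φ1 φ2 f : MvPolynomial (Fin 2) k)
    (hφ1 : φ1 = (X 0 - C α1) * (X 0 - C α2) * (X 0 - C α3) * (X 0 - C α4))
    (hφ2 : φ2 = (X 0 - C β1) * (X 0 - C β2) * (X 0 - C β3) * (X 0 - C β4))
    (hf : f = X 1 ^ 4 - C 2 * (φ1 + φ2) * X 1 ^ 2 + (φ1 - φ2) ^ 2)
    (F : MvPolynomial (Fin 3) k)
    (hFhom : F.IsHomogeneous 6)
    (hFf : aeval ![(X 0 : MvPolynomial (Fin 2) k), X 1, 1] F = f)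
    (Sing : Set (Projectivization k (Fin 3 → k)))
    (hSing : ∀ P : Projectivization k (Fin 3 → k),
      P ∈ Sing ↔ (eval P.rep F = 0 ∧
        eval P.rep (pderiv 0 F) = 0 ∧
        eval P.rep (pderiv 1 F) = 0 ∧
        eval P.rep (pderiv 2 F) = 0))
    (h1 : k → k)
    (hh1 : ∀ x : k, h1 x = (σ1 - τ1) * x ^ 3 - (σ2 - τ2) * x ^ 2 + (σ3 - τ3) * x - (σ4 - τ4))
    -- res1 = Res_x(h1, h1'), the determinant of the Sylvester matrix of the
    -- cubic h1 and its derivative h1'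
    (res1 : k)
    (hres1 : res1 = Matrix.det
      !![σ1 - τ1, -(σ2 - τ2), σ3 - τ3, -(σ4 - τ4), 0;
         0, σ1 - τ1, -(σ2 - τ2), σ3 - τ3, -(σ4 - τ4);
         3 * (σ1 - τ1), -2 * (σ2 - τ2), σ3 - τ3, 0, 0;
         0, 3 * (σ1 - τ1), -2 * (σ2 - τ2), σ3 - τ3, 0;
         0, 0, 3 * (σ1 - τ1), -2 * (σ2 - τ2), σ3 - τ3])
    -- res2 = Res_x(h1', h1''), the determinant of the Sylvester matrix of the
    -- quadratic h1' and the linear h1''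
    (res2 : k)
    (hres2 : res2 = Matrix.det
      !![3 * (σ1 - τ1), -2 * (σ2 - τ2), σ3 - τ3;
         6 * (σ1 - τ1), -2 * (σ2 - τ2), 0;
         0, 6 * (σ1 - τ1), -2 * (σ2 - τ2)])
    (hστ : σ1 ≠ τ1) :
    ((∃! ξ : k, Projectivization.mk k (![ξ, 0, 1] : Fin 3 → k)
        (by intro hc; simpa using congrFun hc 2) ∈ Sing)
      ↔ (res1 = 0 ∧ res2 = 0))
    ∧ (res1 = 0 → res2 = 0 →
        (∀ ξ : k, Projectivization.mk k (![ξ, 0, 1] : Fin 3 → k)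
            (by intro hc; simpa using congrFun hc 2) ∈ Sing
          ↔ ξ = (σ2 - τ2) / (3 * (σ1 - τ1)))
        ∧ Sing = {Projectivization.mk k (![0, 1, 0] : Fin 3 → k)
                    (by intro hc; simpa using congrFun hc 1),
                  Projectivization.mk k
                    (![(σ2 - τ2) / (3 * (σ1 - τ1)), 0, 1] : Fin 3 → k)
                    (by intro hc; simpa using congrFun hc 2)}
        ∧ Sing.ncard = 2) := by
  have hcast : ∀ n : ℕ, n ≠ 0 → n < 5 → (∀ q, 5 ≤ q → ¬ q ∣ n) → (n : k) ≠ 0 := by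
    intro n hn _ hq h
    rw [CharP.cast_eq_zero_iff k p] at h
    rcases hp with rfl | hp
    · exact hn (by simpa using h)
    · exact hq p hp h
  have h2 : (2:k) ≠ 0 := by
    exact_mod_cast hcast 2 (by norm_num) (by norm_num)
      (fun q h5 hq => by have := Nat.le_of_dvd (by norm_num) hq; omega)
  have h3 : (3:k) ≠ 0 := by
    exact_mod_cast hcast 3 (by norm_num) (by norm_num)
      (fun q h5 hq => by have := Nat.le_of_dvd (by norm_num) hq; omega)
  have : Infinite k := IsAlgClosed.instInfinite
  have hs : σ1 - τ1 ≠ 0 := sub_ne_zero.2 hστ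
  have hFG := Aux14.F_eq α1 α2 α3 α4 β1 β2 β3 β4 F hFhom
    (by rw [hFf, hf, hφ1, hφ2])
  rw [← hσ1, ← hσ2, ← hσ3, ← hσ4, ← hτ1, ← hτ2, ← hτ3, ← hτ4] at hFG
  -- membership in terms of coordinates
  have hmem : ∀ (v : Fin 3 → k) (hv : v ≠ 0), Projectivization.mk k v hv ∈ Sing ↔
      (v 2 = 0 ∧ v 0 = 0) ∨ (v 2 ≠ 0 ∧ v 1 = 0 ∧
        (σ1 - τ1) * v 0 ^ 3 - (σ2 - τ2) * v 0 ^ 2 * v 2 + (σ3 - τ3) * v 0 * v 2 ^ 2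
          - (σ4 - τ4) * v 2 ^ 3 = 0) := by
    intro v hv
    rw [hSing]
    obtain ⟨a, ha⟩ := Projectivization.exists_smul_eq_mk_rep k v hv
    have ha' : (a : k) • v = (Projectivization.mk k v hv).rep := ha
    rw [← ha', Aux14.homog_eval hFhom, Aux14.homog_eval hFhom.pderiv,
      Aux14.homog_eval hFhom.pderiv, Aux14.homog_eval hFhom.pderiv]
    simp only [mul_eq_zero, pow_eq_zero_iff', Units.ne_zero, false_and, false_or]
    rw [← Aux14.pt h2 α1 α2 α3 α4 β1 β2 β3 β4 (v 0) (v 1) (v 2) hdist _ _ _ _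
      (-α1 * (v 0 - α2 * v 2) * (v 0 - α3 * v 2) * (v 0 - α4 * v 2)
       - α2 * (v 0 - α1 * v 2) * (v 0 - α3 * v 2) * (v 0 - α4 * v 2)
       - α3 * (v 0 - α1 * v 2) * (v 0 - α2 * v 2) * (v 0 - α4 * v 2)
       - α4 * (v 0 - α1 * v 2) * (v 0 - α2 * v 2) * (v 0 - α3 * v 2))
      (-β1 * (v 0 - β2 * v 2) * (v 0 - β3 * v 2) * (v 0 - β4 * v 2)
       - β2 * (v 0 - β1 * v 2) * (v 0 - β3 * v 2) * (v 0 - β4 * v 2)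
       - β3 * (v 0 - β1 * v 2) * (v 0 - β2 * v 2) * (v 0 - β4 * v 2)
       - β4 * (v 0 - β1 * v 2) * (v 0 - β2 * v 2) * (v 0 - β3 * v 2))
      _
      (3 * (σ1 - τ1) * v 0 ^ 2 - 2 * (σ2 - τ2) * v 0 * v 2 + (σ3 - τ3) * v 2 ^ 2)
      (-(σ2 - τ2) * v 0 ^ 2 + 2 * (σ3 - τ3) * v 0 * v 2 - 3 * (σ4 - τ4) * v 2 ^ 2)
      (σ1 - τ1) (σ2 - τ2) (σ3 - τ3) (σ4 - τ4) rfl rfl rfl rfl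
      (by intro h h'; simp [h, h']) (by intro h h'; simp [h, h']) hs rfl
      (by rw [hσ1, hσ2, hσ3, hσ4, hτ1, hτ2, hτ3, hτ4]; ring)
      (by rw [hσ1, hσ2, hσ3, hτ1, hτ2, hτ3]; ring)]
    rw [hFG]
    refine and_congr ?_ (and_congr ?_ (and_congr ?_ ?_))
    · simp [Aux14.G]
    · refine Eq.congr_left ?_
      simp [Aux14.G, pderiv_X, Pi.single_apply, Derivation.leibniz_pow]; ring
    · refine Eq.congr_left ?_
      simp [Aux14.G, pderiv_X, Pi.single_apply, Derivation.leibniz_pow]; ring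
    · refine Eq.congr_left ?_
      simp [Aux14.G, pderiv_X, Pi.single_apply, Derivation.leibniz_pow]; ring
  obtain ⟨R1, R2⟩ := Aux14.roots h2 h3 (σ1 - τ1) (σ2 - τ2) (σ3 - τ3) (σ4 - τ4) res1 res2 hs hres1 hres2
  have haff : ∀ ξ : k, Projectivization.mk k (![ξ, 0, 1] : Fin 3 → k)
        (by intro hc; simpa using congrFun hc 2) ∈ Sing ↔
        (σ1 - τ1) * ξ ^ 3 - (σ2 - τ2) * ξ ^ 2 + (σ3 - τ3) * ξ - (σ4 - τ4) = 0 := by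
    intro ξ
    rw [hmem]
    simp
  refine ⟨?_, ?_⟩
  · simp only [haff]
    exact R1
  · intro z1 z2
    have R := R2 z1 z2
    have hS : Sing = {Projectivization.mk k (![0, 1, 0] : Fin 3 → k)
                    (by intro hc; simpa using congrFun hc 1),
                  Projectivization.mk k
                    (![(σ2 - τ2) / (3 * (σ1 - τ1)), 0, 1] : Fin 3 → k)
                    (by intro hc; simpa using congrFun hc 2)} := by
      ext P
      induction P using Projectivization.ind with
      | h v hv =>
      rw [Set.mem_insert_iff, Set.mem_singleton_iff, Projectivization.mk_eq_mk_iff',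
        Projectivization.mk_eq_mk_iff']
      constructor
      · intro h
        rcases (hmem v hv).1 h with ⟨hz, hx⟩ | ⟨hz, hy, h⟩
        · left
          refine ⟨v 1, ?_⟩
          ext i; fin_cases i <;> simp [hz, hx]
        · right
          refine ⟨v 2, ?_⟩
          have := (R (v 0 / v 2)).1 (by field_simp; linear_combination h)
          rw [← this]
          ext i; fin_cases i
          · simp; field_simp
          · simp [hy]
          · simp
      · rintro (⟨a, rfl⟩ | ⟨a, rfl⟩)
        · rw [hmem]; left; simp
        · rw [hmem]; right
          have ha : a ≠ 0 := by rintro rfl; simp at hv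
          have := (R _).2 rfl
          generalize (σ2 - τ2) / (3 * (σ1 - τ1)) = t at this
          refine ⟨by simpa using ha, by simp, ?_⟩
          simp
          linear_combination a ^ 3 * this
    refine ⟨fun ξ => by rw [haff, R], hS, ?_⟩
    rw [hS, Set.ncard_pair]
    rw [Ne, Projectivization.mk_eq_mk_iff']
    rintro ⟨a, ha⟩
    simpa using congrFun ha 1
end

section
/- Assume σ1 = τ1, σ2 ≠ τ2, and Res_x(h1, h1′) ≠ 0. Then h1 (a quadratic) has exactly 2 distinct roots ξ1, ξ2 in k, the singular points of the form (x:0:1) are exactly (ξ1:0:1) and (ξ2:0:1), and Sing = {(0:1:0), (1:0:0), (ξ1:0:1), (ξ2:0:1)} has exactly 4 elements. -/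
open MvPolynomial

lemma hom_eval_smul {k σ : Type*} [Field k] {n : ℕ} {φ : MvPolynomial σ k}
    (h : φ.IsHomogeneous n) (a : k) (v : σ → k) :
    eval (a • v) φ = a ^ n * eval v φ := by
  rw [eval_eq, eval_eq, Finset.mul_sum]
  refine Finset.sum_congr rfl fun d hd => ?_
  have hdn := h.degree_eq_sum_deg_support hd
  simp only [Pi.smul_apply, smul_eq_mul, mul_pow, Finset.prod_mul_distrib]
  rw [Finset.prod_pow_eq_pow_sum, hdn]
  ring

/-- The explicit homogenization. -/
noncomputable def homG {k : Type*} [Field k] (c1 c2 c3 c4 d2 d3 d4 : k) :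
    MvPolynomial (Fin 3) k :=
  X 2 ^ 2 * X 1 ^ 4
    - C 2 * (C 2 * X 0 ^ 4 - C c1 * (X 0 ^ 3 * X 2 ^ 1) + C c2 * (X 0 ^ 2 * X 2 ^ 2)
        - C c3 * (X 0 ^ 1 * X 2 ^ 3) + C c4 * X 2 ^ 4) * X 1 ^ 2
    + X 2 ^ 2 * (C d2 * X 0 ^ 2 - C d3 * (X 0 ^ 1 * X 2 ^ 1) + C d4 * X 2 ^ 2) ^ 2

lemma homG_hom {k : Type*} [Field k] (c1 c2 c3 c4 d2 d3 d4 : k) :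
    (homG c1 c2 c3 c4 d2 d3 d4).IsHomogeneous 6 := by
  have hx : ∀ (i : Fin 3) (n : ℕ), (X i ^ n : MvPolynomial (Fin 3) k).IsHomogeneous n :=
    fun i n => isHomogeneous_X_pow i n
  have hq : (C 2 * X 0 ^ 4 - C c1 * (X 0 ^ 3 * X 2 ^ 1) + C c2 * (X 0 ^ 2 * X 2 ^ 2)
        - C c3 * (X 0 ^ 1 * X 2 ^ 3) + C c4 * X 2 ^ 4 :
        MvPolynomial (Fin 3) k).IsHomogeneous 4 :=
    (((((hx 0 4).C_mul 2).sub (((hx 0 3).mul (hx 2 1)).C_mul c1)).add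
      (((hx 0 2).mul (hx 2 2)).C_mul c2)).sub
      (((hx 0 1).mul (hx 2 3)).C_mul c3)).add ((hx 2 4).C_mul c4)
  have hr : (C d2 * X 0 ^ 2 - C d3 * (X 0 ^ 1 * X 2 ^ 1) + C d4 * X 2 ^ 2 :
        MvPolynomial (Fin 3) k).IsHomogeneous 2 :=
    (((hx 0 2).C_mul d2).sub (((hx 0 1).mul (hx 2 1)).C_mul d3)).add ((hx 2 2).C_mul d4)
  exact (((hx 2 2).mul (hx 1 4)).sub ((hq.C_mul 2).mul (hx 1 2))).add ((hx 2 2).mul (hr.pow 2))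

lemma dehom_unique {k : Type*} [Field k] [Infinite k] {F G : MvPolynomial (Fin 3) k} {n : ℕ}
    (hF : F.IsHomogeneous n) (hG : G.IsHomogeneous n)
    (h : aeval ![(X 0 : MvPolynomial (Fin 2) k), X 1, 1] F
       = aeval ![(X 0 : MvPolynomial (Fin 2) k), X 1, 1] G) : F = G := by
  have key : (X 2 : MvPolynomial (Fin 3) k) * F = X 2 * G := by
    apply MvPolynomial.funext
    intro v
    simp only [map_mul, eval_X]
    by_cases hz : v 2 = 0
    · simp [hz]
    have hv : v = v 2 • ![v 0 / v 2, v 1 / v 2, 1] := by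
      ext i
      fin_cases i <;> simp [mul_div_cancel₀, hz]
    have hev : ∀ H : MvPolynomial (Fin 3) k,
        eval ![v 0 / v 2, v 1 / v 2] (aeval ![(X 0 : MvPolynomial (Fin 2) k), X 1, 1] H)
          = eval ![v 0 / v 2, v 1 / v 2, 1] H := by
      intro H
      induction H using MvPolynomial.induction_on with
      | C a => simp [algebraMap_eq]
      | add p q hp hq => simp only [map_add, hp, hq]
      | mul_X p i hp =>
        simp only [map_mul, hp]
        congr 1
        fin_cases i <;> simp
    rw [hv, hom_eval_smul hF, hom_eval_smul hG, ← hev F, ← hev G, h]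
  exact mul_left_cancel₀ (X_ne_zero 2) key

lemma root_contra {k : Type*} [Field k] (h2 : (2 : k) ≠ 0) (a1 a2 a3 a4 x P Q : k)
    (h12 : a1 ≠ a2) (h13 : a1 ≠ a3) (h14 : a1 ≠ a4) (h23 : a2 ≠ a3) (h24 : a2 ≠ a4)
    (h34 : a3 ≠ a4)
    (hP : P = (x - a2) * (x - a3) * (x - a4) + (x - a1) * (x - a3) * (x - a4)
      + (x - a1) * (x - a2) * (x - a4) + (x - a1) * (x - a2) * (x - a3))
    (hx : (x - a1) * (x - a2) * (x - a3) * (x - a4) = 0)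
    (hQ : Q ≠ 0) (h : 2 * 2 * (P * Q) = 0) : False := by
  have hP0 : P = 0 := by
    rcases mul_eq_zero.1 h with h | h
    · exact absurd h (mul_ne_zero h2 h2)
    · exact (mul_eq_zero.1 h).resolve_right hQ
  rw [hP] at hP0
  rcases mul_eq_zero.1 hx with hx | hx
  rcases mul_eq_zero.1 hx with hx | hx
  rcases mul_eq_zero.1 hx with hx | hx
  all_goals
    have hx' := sub_eq_zero.1 hx
    subst hx'
    simp only [sub_self, zero_mul, mul_zero, add_zero, zero_add, mul_eq_zero, sub_eq_zero] at hP0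
    grind

/-- No affine singular points off the line y = 0. -/
lemma affine_sing {k : Type*} [Field k] (h2 : (2 : k) ≠ 0)
    (a1 a2 a3 a4 b1 b2 b3 b4 x y A B A' B' : k)
    (hdist : ([a1, a2, a3, a4, b1, b2, b3, b4] : List k).Pairwise (· ≠ ·))
    (hA : A = (x - a1) * (x - a2) * (x - a3) * (x - a4))
    (hB : B = (x - b1) * (x - b2) * (x - b3) * (x - b4))
    (hA' : A' = (x - a2) * (x - a3) * (x - a4) + (x - a1) * (x - a3) * (x - a4)
      + (x - a1) * (x - a2) * (x - a4) + (x - a1) * (x - a2) * (x - a3))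
    (hB' : B' = (x - b2) * (x - b3) * (x - b4) + (x - b1) * (x - b3) * (x - b4)
      + (x - b1) * (x - b2) * (x - b4) + (x - b1) * (x - b2) * (x - b3))
    (e : y ^ 4 - 2 * (A + B) * y ^ 2 + (A - B) ^ 2 = 0)
    (ex : - 2 * (A' + B') * y ^ 2 + 2 * (A - B) * (A' - B') = 0)
    (ey : 4 * y ^ 3 - 4 * (A + B) * y = 0) : y = 0 := by
  by_contra hy
  have hy2 : y ^ 2 = A + B := by
    have : (2 * 2 * y) * (y ^ 2 - (A + B)) = 0 := by linear_combination ey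
    exact sub_eq_zero.1 ((mul_eq_zero.1 this).resolve_left (mul_ne_zero (mul_ne_zero h2 h2) hy))
  have hAB : A * B = 0 := by
    have : (2 * 2) * (A * B) = 0 := by
      linear_combination (-1) * e + (y ^ 2 - (A + B)) * hy2
    exact (mul_eq_zero.1 this).resolve_left (mul_ne_zero h2 h2)
  have hy0 : A + B ≠ 0 := hy2 ▸ pow_ne_zero 2 hy
  simp only [List.pairwise_cons, List.mem_cons, List.not_mem_nil, or_false, forall_eq_or_imp,
    forall_eq] at hdist
  obtain ⟨⟨h1, h3, h4, -⟩, ⟨h5, h6, -⟩, ⟨h7, -⟩, -, ⟨h8, h9, h10⟩, ⟨h11, h12⟩, h13, -⟩ := hdist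
  rw [hy2] at ex
  rcases mul_eq_zero.1 hAB with h0 | h0
  · have hBne : B ≠ 0 := by simpa [h0] using hy0
    refine root_contra h2 a1 a2 a3 a4 x A' B h1 h3 h4 h5 h6 h7 hA' (hA ▸ h0) hBne ?_
    linear_combination (-1) * ex - 4 * B' * h0
  · have hAne : A ≠ 0 := by simpa [h0] using hy0
    refine root_contra h2 b1 b2 b3 b4 x B' A h8 h9 h10 h11 h12 h13 hB' (hB ▸ h0)
      hAne ?_
    linear_combination (-1) * ex - 4 * A' * h0

/-- The final bookkeeping, independent of the equations. -/
lemma final_sets {k : Type*} [Field k] (Sing : Set (Projectivization k (Fin 3 → k)))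
    (h1 : k → k) (ξ1 ξ2 : k) (hne : ξ1 ≠ ξ2)
    (hrt : ∀ x : k, h1 x = 0 ↔ x = ξ1 ∨ x = ξ2)
    (haff : ∀ x y : k, (∀ hv, Projectivization.mk k (![x, y, 1] : Fin 3 → k) hv ∈ Sing) ↔
      y = 0 ∧ h1 x = 0)
    (hinf : ∀ x y : k, x * y = 0 → ∀ hv,
      Projectivization.mk k (![x, y, 0] : Fin 3 → k) hv ∈ Sing)
    (hinf' : ∀ x y : k, ∀ hv,
      Projectivization.mk k (![x, y, 0] : Fin 3 → k) hv ∈ Sing → x = 0 ∨ y = 0) :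
    ∃ ξ1 ξ2 : k, ξ1 ≠ ξ2
      ∧ (∀ x : k, h1 x = 0 ↔ x = ξ1 ∨ x = ξ2)
      ∧ (∀ ξ : k, Projectivization.mk k (![ξ, 0, 1] : Fin 3 → k)
            (by intro hc; simpa using congrFun hc 2) ∈ Sing
          ↔ ξ = ξ1 ∨ ξ = ξ2)
      ∧ Sing = {Projectivization.mk k (![0, 1, 0] : Fin 3 → k)
                  (by intro hc; simpa using congrFun hc 1),
                Projectivization.mk k (![1, 0, 0] : Fin 3 → k)
                  (by intro hc; simpa using congrFun hc 0),
                Projectivization.mk k (![ξ1, 0, 1] : Fin 3 → k)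
                  (by intro hc; simpa using congrFun hc 2),
                Projectivization.mk k (![ξ2, 0, 1] : Fin 3 → k)
                  (by intro hc; simpa using congrFun hc 2)}
      ∧ Sing.ncard = 4 := by
  have hsing : ∀ ξ : k, Projectivization.mk k (![ξ, 0, 1] : Fin 3 → k)
            (by intro hc; simpa using congrFun hc 2) ∈ Sing
          ↔ ξ = ξ1 ∨ ξ = ξ2 := by
    intro ξ
    rw [← hrt]
    have := haff ξ 0
    rw [forall_prop_of_true (by intro hc; simpa using congrFun hc 2)] at this
    simpa using this
  have hS : Sing = {Projectivization.mk k (![0, 1, 0] : Fin 3 → k)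
                  (by intro hc; simpa using congrFun hc 1),
                Projectivization.mk k (![1, 0, 0] : Fin 3 → k)
                  (by intro hc; simpa using congrFun hc 0),
                Projectivization.mk k (![ξ1, 0, 1] : Fin 3 → k)
                  (by intro hc; simpa using congrFun hc 2),
                Projectivization.mk k (![ξ2, 0, 1] : Fin 3 → k)
                  (by intro hc; simpa using congrFun hc 2)} := by
    ext P
    simp only [Set.mem_insert_iff, Set.mem_singleton_iff]
    constructor
    · induction P using Projectivization.ind with
      | h v hv =>
      intro hP
      by_cases hz : v 2 = 0
      · have hv' : v = ![v 0, v 1, 0] := by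
          ext i; fin_cases i <;> simp [hz]
        generalize v 0 = x at hv'
        generalize v 1 = y at hv'
        subst hv'
        rcases hinf' x y hv hP with rfl | rfl
        · left
          rw [Projectivization.mk_eq_mk_iff']
          exact ⟨y, by simp⟩
        · right; left
          rw [Projectivization.mk_eq_mk_iff']
          exact ⟨x, by simp⟩
      · have hw : (![v 0 / v 2, v 1 / v 2, 1] : Fin 3 → k) ≠ 0 := by
          intro hc; simpa using congrFun hc 2
        have hvw : Projectivization.mk k v hv = Projectivization.mk k _ hw := by
          rw [Projectivization.mk_eq_mk_iff']
          refine ⟨v 2, ?_⟩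
          ext i; fin_cases i <;> simp [mul_div_cancel₀, hz]
        rw [hvw] at hP ⊢
        obtain ⟨hy, hx⟩ := (haff _ _).1 (fun _ => hP)
        right; right
        simp only [hy]
        rcases (hrt _).1 hx with h | h
        · left; simp only [h]
        · right; simp only [h]
    · rintro (rfl | rfl | rfl | rfl)
      · exact hinf 0 1 (by simp) _
      · exact hinf 1 0 (by simp) _
      · exact (hsing ξ1).2 (Or.inl rfl)
      · exact (hsing ξ2).2 (Or.inr rfl)
  refine ⟨ξ1, ξ2, hne, hrt, hsing, hS, ?_⟩
  rw [hS]
  have hmkne : ∀ (v w : Fin 3 → k) (hv : v ≠ 0) (hw : w ≠ 0), (∀ a : k, a • w ≠ v) →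
      Projectivization.mk k v hv ≠ Projectivization.mk k w hw := by
    intro v w hv hw h hc
    rw [Projectivization.mk_eq_mk_iff'] at hc
    obtain ⟨a, ha⟩ := hc
    exact h a ha
  rw [Set.ncard_insert_of_notMem, Set.ncard_insert_of_notMem, Set.ncard_pair]
  · apply hmkne
    intro a ha
    have h0 := congrFun ha 0
    have h2 := congrFun ha 2
    simp at h0 h2
    subst h2
    exact hne (by simpa using h0.symm)
  · simp only [Set.mem_insert_iff, Set.mem_singleton_iff, not_or]
    refine ⟨?_, ?_⟩ <;>
    · apply hmkne
      intro a ha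
      have h0 := congrFun ha 0
      have h2 := congrFun ha 2
      simp at h0 h2
      simp [h2] at h0
  · simp only [Set.mem_insert_iff, Set.mem_singleton_iff, not_or]
    refine ⟨?_, ?_, ?_⟩ <;>
    · apply hmkne
      intro a ha
      have h1 := congrFun ha 1
      simp at h1

/-- Case (II-1): if σ1 = τ1, σ2 ≠ τ2 and Res_x(h1, h1') ≠ 0 (h1 now being a
quadratic), then h1 has exactly 2 distinct roots ξ1, ξ2, the singular points of
the form (x:0:1) are exactly (ξ1:0:1) and (ξ2:0:1), and
Sing = {(0:1:0), (1:0:0), (ξ1:0:1), (ξ2:0:1)} has exactly 4 elements. -/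
theorem stmt_15
    {k : Type*} [Field k] [IsAlgClosed k]
    (p : ℕ) [CharP k p] (hp : p = 0 ∨ 5 ≤ p)
    (α1 α2 α3 α4 β1 β2 β3 β4 : k)
    (hdist : ([α1, α2, α3, α4, β1, β2, β3, β4] : List k).Pairwise (· ≠ ·))
    (σ1 σ2 σ3 σ4 τ1 τ2 τ3 τ4 : k)
    (hσ1 : σ1 = α1 + α2 + α3 + α4)
    (hσ2 : σ2 = α1 * α2 + α1 * α3 + α1 * α4 + α2 * α3 + α2 * α4 + α3 * α4)
    (hσ3 : σ3 = α1 * α2 * α3 + α1 * α2 * α4 + α1 * α3 * α4 + α2 * α3 * α4)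
    (hσ4 : σ4 = α1 * α2 * α3 * α4)
    (hτ1 : τ1 = β1 + β2 + β3 + β4)
    (hτ2 : τ2 = β1 * β2 + β1 * β3 + β1 * β4 + β2 * β3 + β2 * β4 + β3 * β4)
    (hτ3 : τ3 = β1 * β2 * β3 + β1 * β2 * β4 + β1 * β3 * β4 + β2 * β3 * β4)
    (hτ4 : τ4 = β1 * β2 * β3 * β4)
    (φ1 φ2 f : MvPolynomial (Fin 2) k)
    (hφ1 : φ1 = (X 0 - C α1) * (X 0 - C α2) * (X 0 - C α3) * (X 0 - C α4))
    (hφ2 : φ2 = (X 0 - C β1) * (X 0 - C β2) * (X 0 - C β3) * (X 0 - C β4))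
    (hf : f = X 1 ^ 4 - C 2 * (φ1 + φ2) * X 1 ^ 2 + (φ1 - φ2) ^ 2)
    (F : MvPolynomial (Fin 3) k)
    (hFhom : F.IsHomogeneous 6)
    (hFf : aeval ![(X 0 : MvPolynomial (Fin 2) k), X 1, 1] F = f)
    (Sing : Set (Projectivization k (Fin 3 → k)))
    (hSing : ∀ P : Projectivization k (Fin 3 → k),
      P ∈ Sing ↔ (eval P.rep F = 0 ∧
        eval P.rep (pderiv 0 F) = 0 ∧
        eval P.rep (pderiv 1 F) = 0 ∧
        eval P.rep (pderiv 2 F) = 0))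
    (h1 : k → k)
    (hh1 : ∀ x : k, h1 x = (σ1 - τ1) * x ^ 3 - (σ2 - τ2) * x ^ 2 + (σ3 - τ3) * x - (σ4 - τ4))
    -- resq = Res_x(h1, h1') where (σ1 = τ1 and) h1 is the quadratic
    -- -(σ2-τ2)x² + (σ3-τ3)x - (σ4-τ4), as a Sylvester determinant
    (resq : k)
    (hresq : resq = Matrix.det
      !![-(σ2 - τ2), σ3 - τ3, -(σ4 - τ4);
         -2 * (σ2 - τ2), σ3 - τ3, 0;
         0, -2 * (σ2 - τ2), σ3 - τ3])
    (hστ1 : σ1 = τ1) (hστ2 : σ2 ≠ τ2) (hrq : resq ≠ 0) :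
    ∃ ξ1 ξ2 : k, ξ1 ≠ ξ2
      ∧ (∀ x : k, h1 x = 0 ↔ x = ξ1 ∨ x = ξ2)
      ∧ (∀ ξ : k, Projectivization.mk k (![ξ, 0, 1] : Fin 3 → k)
            (by intro hc; simpa using congrFun hc 2) ∈ Sing
          ↔ ξ = ξ1 ∨ ξ = ξ2)
      ∧ Sing = {Projectivization.mk k (![0, 1, 0] : Fin 3 → k)
                  (by intro hc; simpa using congrFun hc 1),
                Projectivization.mk k (![1, 0, 0] : Fin 3 → k)
                  (by intro hc; simpa using congrFun hc 0),
                Projectivization.mk k (![ξ1, 0, 1] : Fin 3 → k)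
                  (by intro hc; simpa using congrFun hc 2),
                Projectivization.mk k (![ξ2, 0, 1] : Fin 3 → k)
                  (by intro hc; simpa using congrFun hc 2)}
      ∧ Sing.ncard = 4 := by
  have h2 : (2 : k) ≠ 0 := by
    intro h
    have h' : ((2 : ℕ) : k) = 0 := by exact_mod_cast h
    rw [CharP.cast_eq_zero_iff k p] at h'
    rcases hp with rfl | hp
    · simp at h'
    · have := Nat.le_of_dvd (by norm_num) h'
      omega
  haveI : NeZero (2 : k) := ⟨h2⟩
  have hd2 : σ2 - τ2 ≠ 0 := sub_ne_zero.2 hστ2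
  have : Infinite k := IsAlgClosed.instInfinite
  set G := homG (σ1 + τ1) (σ2 + τ2) (σ3 + τ3) (σ4 + τ4) (σ2 - τ2) (σ3 - τ3) (σ4 - τ4) with hG
  have hFG : F = G := by
    apply dehom_unique hFhom (homG_hom ..)
    have e1 : φ1 = X 0 ^ 4 - C τ1 * X 0 ^ 3 + C σ2 * X 0 ^ 2 - C σ3 * X 0 + C σ4 := by
      rw [hφ1, ← hστ1, hσ1, hσ2, hσ3, hσ4]
      simp only [map_add, map_mul]
      ring
    have e2 : φ2 = X 0 ^ 4 - C τ1 * X 0 ^ 3 + C τ2 * X 0 ^ 2 - C τ3 * X 0 + C τ4 := by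
      rw [hφ2, hτ1, hτ2, hτ3, hτ4]
      simp only [map_add, map_mul]
      ring
    have h22 : (C 2 : MvPolynomial (Fin 2) k) = 2 := map_ofNat C 2
    have e3 : φ1 - φ2 = (C σ2 - C τ2) * X 0 ^ 2 - (C σ3 - C τ3) * X 0 + (C σ4 - C τ4) := by
      rw [e1, e2]; ring
    rw [hFf, hf, e3, e1, e2, hστ1]
    clear * - h22
    simp only [homG, map_add, map_sub, map_mul, map_pow, h22,
      aeval_X, aeval_C, algebraMap_eq, Matrix.cons_val, Matrix.cons_val_zero, Matrix.cons_val_one,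
      one_pow, pow_one, mul_one, one_mul]
    ring
  have hmem : ∀ (v : Fin 3 → k) (hv : v ≠ 0), Projectivization.mk k v hv ∈ Sing ↔
      (eval v G = 0 ∧ eval v (pderiv 0 G) = 0 ∧ eval v (pderiv 1 G) = 0
        ∧ eval v (pderiv 2 G) = 0) := by
    intro v hv
    rw [hSing, hFG]
    obtain ⟨a, ha⟩ := Projectivization.exists_smul_eq_mk_rep k v hv
    have hh : G.IsHomogeneous 6 := homG_hom ..
    rw [← ha, Units.smul_def, hom_eval_smul hh, hom_eval_smul hh.pderiv, hom_eval_smul hh.pderiv,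
      hom_eval_smul hh.pderiv]
    simp
  have hexp : ∀ (x y z : k), 
      (eval ![x, y, z] G = z ^ 2 * y ^ 4 - 2 * (2 * x ^ 4 - (σ1 + τ1) * x ^ 3 * z
        + (σ2 + τ2) * x ^ 2 * z ^ 2 - (σ3 + τ3) * x * z ^ 3 + (σ4 + τ4) * z ^ 4) * y ^ 2
        + z ^ 2 * ((σ2 - τ2) * x ^ 2 - (σ3 - τ3) * x * z + (σ4 - τ4) * z ^ 2) ^ 2) ∧
      (eval ![x, y, z] (pderiv 0 G) = - 2 * (8 * x ^ 3 - 3 * (σ1 + τ1) * x ^ 2 * z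
        + 2 * (σ2 + τ2) * x * z ^ 2 - (σ3 + τ3) * z ^ 3) * y ^ 2
        + 2 * z ^ 2 * ((σ2 - τ2) * x ^ 2 - (σ3 - τ3) * x * z + (σ4 - τ4) * z ^ 2)
          * (2 * (σ2 - τ2) * x - (σ3 - τ3) * z)) ∧
      (eval ![x, y, z] (pderiv 1 G) = 4 * z ^ 2 * y ^ 3 - 4 * (2 * x ^ 4 - (σ1 + τ1) * x ^ 3 * z
        + (σ2 + τ2) * x ^ 2 * z ^ 2 - (σ3 + τ3) * x * z ^ 3 + (σ4 + τ4) * z ^ 4) * y) ∧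
      (eval ![x, y, z] (pderiv 2 G) = 2 * z * y ^ 4 - 2 * (- (σ1 + τ1) * x ^ 3
        + 2 * (σ2 + τ2) * x ^ 2 * z - 3 * (σ3 + τ3) * x * z ^ 2 + 4 * (σ4 + τ4) * z ^ 3) * y ^ 2
        + 2 * z * ((σ2 - τ2) * x ^ 2 - (σ3 - τ3) * x * z + (σ4 - τ4) * z ^ 2) ^ 2
        + 2 * z ^ 2 * ((σ2 - τ2) * x ^ 2 - (σ3 - τ3) * x * z + (σ4 - τ4) * z ^ 2)
          * (- (σ3 - τ3) * x + 2 * (σ4 - τ4) * z)) := by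
    intro x y z
    rw [hG]
    refine ⟨?_, ?_, ?_, ?_⟩ <;>
    · simp [homG, pderiv_X, Derivation.leibniz, Derivation.leibniz_pow, Pi.single_apply]
      try ring
  -- affine points
  have haff : ∀ x y : k, (∀ hv, Projectivization.mk k (![x, y, 1] : Fin 3 → k) hv ∈ Sing) ↔
      y = 0 ∧ h1 x = 0 := by
    intro x y
    have hv : (![x, y, 1] : Fin 3 → k) ≠ 0 := by intro hc; simpa using congrFun hc 2
    obtain ⟨e0, e1, e2, e3⟩ := hexp x y 1
    rw [forall_prop_of_true hv, hmem, e0, e1, e2, e3, hh1]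
    constructor
    · rintro ⟨q0, q1, q2, -⟩
      have hy : y = 0 := by
        have hA : x ^ 4 - τ1 * x ^ 3 + σ2 * x ^ 2 - σ3 * x + σ4
            = (x - α1) * (x - α2) * (x - α3) * (x - α4) := by
          rw [← hστ1, hσ1, hσ2, hσ3, hσ4]; ring
        have hB : x ^ 4 - τ1 * x ^ 3 + τ2 * x ^ 2 - τ3 * x + τ4
            = (x - β1) * (x - β2) * (x - β3) * (x - β4) := by
          rw [hτ1, hτ2, hτ3, hτ4]; ring
        have hA' : 4 * x ^ 3 - 3 * τ1 * x ^ 2 + 2 * σ2 * x - σ3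
            = (x - α2) * (x - α3) * (x - α4) + (x - α1) * (x - α3) * (x - α4)
              + (x - α1) * (x - α2) * (x - α4) + (x - α1) * (x - α2) * (x - α3) := by
          rw [← hστ1, hσ1, hσ2, hσ3]; ring
        have hB' : 4 * x ^ 3 - 3 * τ1 * x ^ 2 + 2 * τ2 * x - τ3
            = (x - β2) * (x - β3) * (x - β4) + (x - β1) * (x - β3) * (x - β4)
              + (x - β1) * (x - β2) * (x - β4) + (x - β1) * (x - β2) * (x - β3) := by
          rw [hτ1, hτ2, hτ3]; ring
        rw [hστ1] at q0 q1 q2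
        refine affine_sing h2 α1 α2 α3 α4 β1 β2 β3 β4 x y _ _ _ _ hdist hA hB hA' hB' ?_ ?_ ?_
        · linear_combination q0
        · linear_combination q1
        · linear_combination q2
      refine ⟨hy, ?_⟩
      subst hy
      have : ((σ2 - τ2) * x ^ 2 - (σ3 - τ3) * x + (σ4 - τ4)) ^ 2 = 0 := by
        linear_combination q0
      have := pow_eq_zero_iff (two_ne_zero) |>.1 this
      linear_combination - this + x ^ 3 * hστ1
    · rintro ⟨rfl, hx⟩
      have hx' : (σ2 - τ2) * x ^ 2 - (σ3 - τ3) * x * 1 + (σ4 - τ4) * 1 ^ 2 = 0 := by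
        linear_combination - hx + x ^ 3 * hστ1
      rw [hx']
      simp
  have hinf : ∀ x y : k, x * y = 0 → ∀ hv,
      Projectivization.mk k (![x, y, 0] : Fin 3 → k) hv ∈ Sing := by
    intro x y hxy hv
    obtain ⟨e0, e1, e2, e3⟩ := hexp x y 0
    rw [hmem, e0, e1, e2, e3]
    rcases mul_eq_zero.1 hxy with rfl | rfl <;> simp
  have hinf' : ∀ x y : k, ∀ hv,
      Projectivization.mk k (![x, y, 0] : Fin 3 → k) hv ∈ Sing → x = 0 ∨ y = 0 := by
    intro x y hv hm
    rw [hmem, (hexp x y 0).1] at hm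
    by_contra! hc
    have : (2 * 2) * (x ^ 4 * y ^ 2) = 0 := by linear_combination - hm.1
    exact mul_ne_zero (mul_ne_zero h2 h2)
      (mul_ne_zero (pow_ne_zero 4 hc.1) (pow_ne_zero 2 hc.2)) this
  obtain ⟨s, hs⟩ := IsAlgClosed.exists_eq_mul_self
    (discrim (-(σ2 - τ2)) (σ3 - τ3) (-(σ4 - τ4)))
  have hroots := quadratic_eq_zero_iff (neg_ne_zero.2 hd2) hs
  have hs0 : s ≠ 0 := by
    rintro rfl
    apply hrq
    rw [hresq, Matrix.det_fin_three]
    simp only [discrim] at hs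
    simp
    linear_combination (σ2 - τ2) * hs
  have hrt : ∀ x : k, h1 x = 0 ↔ x = (-(σ3 - τ3) + s) / (2 * -(σ2 - τ2)) ∨
      x = (-(σ3 - τ3) - s) / (2 * -(σ2 - τ2)) := by
    intro x
    rw [← hroots, hh1, hστ1]
    constructor <;> intro h <;> linear_combination h
  have hne : (-(σ3 - τ3) + s) / (2 * -(σ2 - τ2)) ≠ (-(σ3 - τ3) - s) / (2 * -(σ2 - τ2)) := by
    intro h
    rw [div_left_inj' (mul_ne_zero h2 (neg_ne_zero.2 hd2))] at h
    exact mul_ne_zero h2 hs0 (by linear_combination h)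
  exact final_sets Sing h1 _ _ hne hrt haff hinf hinf'
end

section
/- Assume σ1 = τ1, σ2 = τ2, and σ3 = τ3 (then automatically σ4 ≠ τ4 since the αi and βj are pairwise distinct). Then the projective curve F = 0 has no singular point of the form (x:0:1), and Sing = {(0:1:0), (1:0:0)} has exactly 2 elements. -/
open MvPolynomial

theorem aux_root {k : Type*} [Field k] (a1 a2 a3 a4 x z : k) (hz : z ≠ 0)
    (h12 : a1 ≠ a2) (h13 : a1 ≠ a3) (h14 : a1 ≠ a4) (h23 : a2 ≠ a3) (h24 : a2 ≠ a4)
    (h34 : a3 ≠ a4)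
    (h : (x - a1 * z) * (x - a2 * z) * (x - a3 * z) * (x - a4 * z) = 0)
    (hd : (x - a2 * z) * (x - a3 * z) * (x - a4 * z) + (x - a1 * z) * (x - a3 * z) * (x - a4 * z)
      + (x - a1 * z) * (x - a2 * z) * (x - a4 * z)
      + (x - a1 * z) * (x - a2 * z) * (x - a3 * z) = 0) : False := by
  have key : ∀ a b : k, a ≠ b → a * z - b * z ≠ 0 := by
    intro a b hab h0
    rw [← sub_mul] at h0
    exact (mul_ne_zero (sub_ne_zero.2 hab) hz) h0
  rcases mul_eq_zero.1 h with h | h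
  · rcases mul_eq_zero.1 h with h | h
    · rcases mul_eq_zero.1 h with h | h
      · obtain rfl : x = a1 * z := sub_eq_zero.1 h
        exact mul_ne_zero (mul_ne_zero (key _ _ h12) (key _ _ h13)) (key _ _ h14)
          (by linear_combination hd)
      · obtain rfl : x = a2 * z := sub_eq_zero.1 h
        exact mul_ne_zero (mul_ne_zero (key _ _ h12.symm) (key _ _ h23)) (key _ _ h24)
          (by linear_combination hd)
    · obtain rfl : x = a3 * z := sub_eq_zero.1 h
      exact mul_ne_zero (mul_ne_zero (key _ _ h13.symm) (key _ _ h23.symm)) (key _ _ h34)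
        (by linear_combination hd)
  · obtain rfl : x = a4 * z := sub_eq_zero.1 h
    exact mul_ne_zero (mul_ne_zero (key _ _ h14.symm) (key _ _ h24.symm)) (key _ _ h34.symm)
      (by linear_combination hd)

theorem aux_eval {k : Type*} [Field k] (F : MvPolynomial (Fin 3) k) (n : ℕ)
    (hF : F.IsHomogeneous n) (x y z : k) (hz : z ≠ 0) :
    eval ![x, y, z] F = z ^ n * eval ![x / z, y / z, 1] F := by
  rw [eval_eq, eval_eq, Finset.mul_sum]
  refine Finset.sum_congr rfl fun d hd => ?_
  have hdeg := hF (mem_support_iff.1 hd)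
  have hs : d 0 + d 1 + d 2 = n := by
    rw [← hdeg, Finsupp.weight_apply, Finsupp.sum_fintype _ _ (by simp)]
    simp [Fin.sum_univ_three]
  rw [← hs]
  have : ∀ v : Fin 3 → k, ∏ i ∈ d.support, v i ^ d i = v 0 ^ d 0 * v 1 ^ d 1 * v 2 ^ d 2 := by
    intro v
    rw [← Fin.prod_univ_three (fun i => v i ^ d i)]
    refine Finset.prod_subset (Finset.subset_univ _) ?_
    intro i _ hi
    rw [Finsupp.notMem_support_iff.1 hi, pow_zero]
  rw [this, this]
  simp only [Matrix.cons_val]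
  rw [div_pow, div_pow, pow_add, pow_add]
  field_simp
  try simp

/-- Case (II-4): if σ1 = τ1, σ2 = τ2 and σ3 = τ3 (then automatically σ4 ≠ τ4),
then F = 0 has no singular point of the form (x:0:1), and
Sing = {(0:1:0), (1:0:0)} has exactly 2 elements. -/
theorem stmt_18
    {k : Type*} [Field k] [IsAlgClosed k]
    (p : ℕ) [CharP k p] (hp : p = 0 ∨ 5 ≤ p)
    (α1 α2 α3 α4 β1 β2 β3 β4 : k)
    (hdist : ([α1, α2, α3, α4, β1, β2, β3, β4] : List k).Pairwise (· ≠ ·))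
    (σ1 σ2 σ3 σ4 τ1 τ2 τ3 τ4 : k)
    (hσ1 : σ1 = α1 + α2 + α3 + α4)
    (hσ2 : σ2 = α1 * α2 + α1 * α3 + α1 * α4 + α2 * α3 + α2 * α4 + α3 * α4)
    (hσ3 : σ3 = α1 * α2 * α3 + α1 * α2 * α4 + α1 * α3 * α4 + α2 * α3 * α4)
    (hσ4 : σ4 = α1 * α2 * α3 * α4)
    (hτ1 : τ1 = β1 + β2 + β3 + β4)
    (hτ2 : τ2 = β1 * β2 + β1 * β3 + β1 * β4 + β2 * β3 + β2 * β4 + β3 * β4)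
    (hτ3 : τ3 = β1 * β2 * β3 + β1 * β2 * β4 + β1 * β3 * β4 + β2 * β3 * β4)
    (hτ4 : τ4 = β1 * β2 * β3 * β4)
    (φ1 φ2 f : MvPolynomial (Fin 2) k)
    (hφ1 : φ1 = (X 0 - C α1) * (X 0 - C α2) * (X 0 - C α3) * (X 0 - C α4))
    (hφ2 : φ2 = (X 0 - C β1) * (X 0 - C β2) * (X 0 - C β3) * (X 0 - C β4))
    (hf : f = X 1 ^ 4 - C 2 * (φ1 + φ2) * X 1 ^ 2 + (φ1 - φ2) ^ 2)
    (F : MvPolynomial (Fin 3) k)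
    (hFhom : F.IsHomogeneous 6)
    (hFf : aeval ![(X 0 : MvPolynomial (Fin 2) k), X 1, 1] F = f)
    (Sing : Set (Projectivization k (Fin 3 → k)))
    (hSing : ∀ P : Projectivization k (Fin 3 → k),
      P ∈ Sing ↔ (eval P.rep F = 0 ∧
        eval P.rep (pderiv 0 F) = 0 ∧
        eval P.rep (pderiv 1 F) = 0 ∧
        eval P.rep (pderiv 2 F) = 0))
    (hστ1 : σ1 = τ1) (hστ2 : σ2 = τ2) (hστ3 : σ3 = τ3) :
    σ4 ≠ τ4
    ∧ (∀ ξ : k, Projectivization.mk k (![ξ, 0, 1] : Fin 3 → k)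
        (by intro hc; simpa using congrFun hc 2) ∉ Sing)
    ∧ Sing = {Projectivization.mk k (![0, 1, 0] : Fin 3 → k)
                (by intro hc; simpa using congrFun hc 1),
              Projectivization.mk k (![1, 0, 0] : Fin 3 → k)
                (by intro hc; simpa using congrFun hc 0)}
    ∧ Sing.ncard = 2 := by
  have h2 : (2 : k) ≠ 0 := by
    intro h
    have h' : ((2 : ℕ) : k) = 0 := by exact_mod_cast h
    rw [CharP.cast_eq_zero_iff k p] at h'
    rcases hp with rfl | hp
    · simp at h'
    · have := Nat.le_of_dvd (by norm_num) h'
      omega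
  simp only [List.pairwise_cons, List.mem_cons, List.not_mem_nil, or_false, forall_eq_or_imp,
    forall_eq, List.Pairwise.nil, and_true] at hdist
  obtain ⟨⟨a12, a13, a14, a1b1, a1b2, a1b3, a1b4⟩, ⟨a23, a24, -⟩, ⟨a34, -⟩, -,
    ⟨b12, b13, b14⟩, ⟨b23, b24⟩, b34, -⟩ := hdist
  have e1 : α1 + α2 + α3 + α4 = β1 + β2 + β3 + β4 := by rw [← hσ1, ← hτ1, hστ1]
  have e2 : α1 * α2 + α1 * α3 + α1 * α4 + α2 * α3 + α2 * α4 + α3 * α4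
    = β1 * β2 + β1 * β3 + β1 * β4 + β2 * β3 + β2 * β4 + β3 * β4 := by rw [← hσ2, ← hτ2, hστ2]
  have e3 : α1 * α2 * α3 + α1 * α2 * α4 + α1 * α3 * α4 + α2 * α3 * α4
    = β1 * β2 * β3 + β1 * β2 * β4 + β1 * β3 * β4 + β2 * β3 * β4 := by rw [← hσ3, ← hτ3, hστ3]
  have hc : σ4 ≠ τ4 := by
    intro e4
    rw [hσ4, hτ4] at e4
    apply mul_ne_zero (mul_ne_zero (mul_ne_zero (sub_ne_zero.2 a1b1) (sub_ne_zero.2 a1b2))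
      (sub_ne_zero.2 a1b3)) (sub_ne_zero.2 a1b4)
    linear_combination α1 ^ 3 * e1 - α1 ^ 2 * e2 + α1 * e3 - e4
  -- the explicit form of F
  have hG : F = X 1 ^ 4 * X 2 ^ 2 - C 2 *
      ((X 0 - C α1 * X 2) * (X 0 - C α2 * X 2) * (X 0 - C α3 * X 2) * (X 0 - C α4 * X 2) +
       (X 0 - C β1 * X 2) * (X 0 - C β2 * X 2) * (X 0 - C β3 * X 2) * (X 0 - C β4 * X 2)) * X 1 ^ 2
      + C ((σ4 - τ4) ^ 2) * X 2 ^ 6 := by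
    apply mul_left_cancel₀ (X_ne_zero (R := k) (2 : Fin 3))
    have : Infinite k := IsAlgClosed.instInfinite
    apply MvPolynomial.funext
    intro v
    obtain ⟨x, y, z, rfl⟩ : ∃ x y z, v = ![x, y, z] :=
      ⟨v 0, v 1, v 2, by ext i; fin_cases i <;> rfl⟩
    rw [map_mul, map_mul]
    simp only [eval_X, Matrix.cons_val]
    by_cases hz : z = 0
    · simp [hz]
    congr 1
    rw [aux_eval F 6 hFhom x y z hz]
    have hev : eval ![x / z, y / z, 1] F = eval ![x / z, y / z] f := by
      rw [← hFf]
      have : (eval ![x / z, y / z]).comp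
          (aeval ![(X 0 : MvPolynomial (Fin 2) k), X 1, 1]).toRingHom
          = eval ![x / z, y / z, 1] := by
        apply MvPolynomial.ringHom_ext
        · intro r; simp
        · intro i; fin_cases i <;> simp
      rw [← this]; rfl
    rw [hev, hf, hφ1, hφ2]
    simp only [map_add, map_sub, map_mul, map_pow, eval_X, eval_C, Matrix.cons_val]
    have hd : (x / z - α1) * (x / z - α2) * (x / z - α3) * (x / z - α4) -
        (x / z - β1) * (x / z - β2) * (x / z - β3) * (x / z - β4) = σ4 - τ4 := by
      rw [hσ4, hτ4]
      linear_combination -(x/z) ^ 3 * e1 + (x/z) ^ 2 * e2 - (x/z) * e3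
    rw [hd]
    field_simp
  have crit : ∀ v : Fin 3 → k, (eval v F = 0 ∧ eval v (pderiv 0 F) = 0 ∧
      eval v (pderiv 1 F) = 0 ∧ eval v (pderiv 2 F) = 0) ↔ (v 2 = 0 ∧ (v 0 = 0 ∨ v 1 = 0)) := by
    intro v
    obtain ⟨x, y, z, rfl⟩ : ∃ x y z, v = ![x, y, z] :=
      ⟨v 0, v 1, v 2, by ext i; fin_cases i <;> rfl⟩
    rw [hG]
    simp only [map_add, map_sub, map_mul, map_pow, Derivation.leibniz, Derivation.leibniz_pow,
      pderiv_X, pderiv_C, smul_eq_mul, eval_X, eval_C, Pi.single_apply, Matrix.cons_val]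
    simp
    constructor
    · rintro ⟨hF0, hFx, hFy, -⟩
      by_cases hz : z = 0
      · refine ⟨hz, ?_⟩
        subst hz
        have : 2 * 2 * (x ^ 4 * y ^ 2) = 0 := by linear_combination -hF0
        have := (mul_eq_zero.1 this).resolve_left (mul_ne_zero h2 h2)
        rcases mul_eq_zero.1 this with h | h
        · exact Or.inl (pow_eq_zero_iff (by norm_num) |>.1 h)
        · exact Or.inr (pow_eq_zero_iff (by norm_num) |>.1 h)
      · exfalso
        have hy : y ≠ 0 := by
          rintro rfl
          have : (σ4 - τ4) ^ 2 * z ^ 6 = 0 := by linear_combination hF0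
          exact mul_ne_zero (pow_ne_zero _ (sub_ne_zero.2 hc)) (pow_ne_zero _ hz) this
        have hd : (x - α1 * z) * (x - α2 * z) * (x - α3 * z) * (x - α4 * z) -
            (x - β1 * z) * (x - β2 * z) * (x - β3 * z) * (x - β4 * z) = (σ4 - τ4) * z ^ 4 := by
          rw [hσ4, hτ4]
          linear_combination -x ^ 3 * z * e1 + x ^ 2 * z ^ 2 * e2 - x * z ^ 3 * e3
        have hdd : ((x - α2 * z) * (x - α3 * z) * (x - α4 * z)
            + (x - α1 * z) * (x - α3 * z) * (x - α4 * z)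
            + (x - α1 * z) * (x - α2 * z) * (x - α4 * z)
            + (x - α1 * z) * (x - α2 * z) * (x - α3 * z)) -
            ((x - β2 * z) * (x - β3 * z) * (x - β4 * z)
            + (x - β1 * z) * (x - β3 * z) * (x - β4 * z)
            + (x - β1 * z) * (x - β2 * z) * (x - β4 * z)
            + (x - β1 * z) * (x - β2 * z) * (x - β3 * z)) = 0 := by
          linear_combination -3 * x ^ 2 * z * e1 + 2 * x * z ^ 2 * e2 - z ^ 3 * e3
        have hr1 := aux_root α1 α2 α3 α4 x z hz a12 a13 a14 a23 a24 a34
        have hr2 := aux_root β1 β2 β3 β4 x z hz b12 b13 b14 b23 b24 b34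
        have hx1 : 2 * y ^ 2 * (((x - α2 * z) * (x - α3 * z) * (x - α4 * z)
            + (x - α1 * z) * (x - α3 * z) * (x - α4 * z)
            + (x - α1 * z) * (x - α2 * z) * (x - α4 * z)
            + (x - α1 * z) * (x - α2 * z) * (x - α3 * z)) +
            ((x - β2 * z) * (x - β3 * z) * (x - β4 * z)
            + (x - β1 * z) * (x - β3 * z) * (x - β4 * z)
            + (x - β1 * z) * (x - β2 * z) * (x - β4 * z)
            + (x - β1 * z) * (x - β2 * z) * (x - β3 * z))) = 0 := by
          rcases hFx with h | h | h
          · exact absurd h hy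
          · exact absurd h h2
          · linear_combination 2 * y ^ 2 * h
        generalize (x - α2 * z) * (x - α3 * z) * (x - α4 * z)
            + (x - α1 * z) * (x - α3 * z) * (x - α4 * z)
            + (x - α1 * z) * (x - α2 * z) * (x - α4 * z)
            + (x - α1 * z) * (x - α2 * z) * (x - α3 * z) = D1 at *
        generalize (x - β2 * z) * (x - β3 * z) * (x - β4 * z)
            + (x - β1 * z) * (x - β3 * z) * (x - β4 * z)
            + (x - β1 * z) * (x - β2 * z) * (x - β4 * z)
            + (x - β1 * z) * (x - β2 * z) * (x - β3 * z) = D2 at *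
        generalize (x - α1 * z) * (x - α2 * z) * (x - α3 * z) * (x - α4 * z) = A at *
        generalize (x - β1 * z) * (x - β2 * z) * (x - β3 * z) * (x - β4 * z) = B at *
        have hs := (mul_eq_zero.1 hx1).resolve_left (mul_ne_zero h2 (pow_ne_zero _ hy))
        have hD1 : D1 = 0 := by
          have : 2 * D1 = 0 := by linear_combination hs + hdd
          exact (mul_eq_zero.1 this).resolve_left h2
        have hD2 : D2 = 0 := by linear_combination hD1 - hdd
        have hy1 : (2 * 2 * y) * (y ^ 2 * z ^ 2 - (A + B)) = 0 := by
          linear_combination hFy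
        have hy2 := (mul_eq_zero.1 hy1).resolve_left (mul_ne_zero (mul_ne_zero h2 h2) hy)
        have hAB : (2 * 2) * (A * B) = 0 := by
          linear_combination -z ^ 2 * hF0 + (A - B + (σ4 - τ4) * z ^ 4) * (-hd)
            + (y ^ 2 * z ^ 2 - (A + B)) * hy2
        have hAB' := (mul_eq_zero.1 hAB).resolve_left (mul_ne_zero h2 h2)
        rcases mul_eq_zero.1 hAB' with h | h
        · exact hr1 h hD1
        · exact hr2 h hD2
    · rintro ⟨rfl, rfl | rfl⟩ <;> simp
  have memS : ∀ P, P ∈ Sing ↔ (P.rep 2 = 0 ∧ (P.rep 0 = 0 ∨ P.rep 1 = 0)) := by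
    intro P; rw [hSing, crit]
  have hrep : ∀ (v : Fin 3 → k) (hv : v ≠ 0), ∃ a : k, a ≠ 0 ∧
      (Projectivization.mk k v hv).rep = a • v := by
    intro v hv
    obtain ⟨a, ha⟩ := Projectivization.exists_smul_eq_mk_rep k v hv
    exact ⟨a, a.ne_zero, ha.symm⟩
  have hS : Sing = {Projectivization.mk k (![0, 1, 0] : Fin 3 → k)
                (by intro hc; simpa using congrFun hc 1),
              Projectivization.mk k (![1, 0, 0] : Fin 3 → k)
                (by intro hc; simpa using congrFun hc 0)} := by
    ext P
    rw [Set.mem_insert_iff, Set.mem_singleton_iff]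
    constructor
    · intro hP
      obtain ⟨hz, h | h⟩ := (memS P).1 hP
      · left
        rw [← P.mk_rep, Projectivization.mk_eq_mk_iff']
        exact ⟨P.rep 1, by ext i; fin_cases i <;> simp [hz, h]⟩
      · right
        rw [← P.mk_rep, Projectivization.mk_eq_mk_iff']
        exact ⟨P.rep 0, by ext i; fin_cases i <;> simp [hz, h]⟩
    · rintro (rfl | rfl)
      · obtain ⟨a, ha, h⟩ := hrep ![0, 1, 0] (by intro hc; simpa using congrFun hc 1)
        rw [memS, h]; simp
      · obtain ⟨a, ha, h⟩ := hrep ![1, 0, 0] (by intro hc; simpa using congrFun hc 0)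
        rw [memS, h]; simp
  refine ⟨hc, ?_, hS, ?_⟩
  · intro ξ
    obtain ⟨a, ha, h⟩ := hrep ![ξ, 0, 1] (by intro hc; simpa using congrFun hc 2)
    rw [memS, h]; simp [ha]
  · rw [hS]
    apply Set.ncard_pair
    rw [Ne, Projectivization.mk_eq_mk_iff']
    rintro ⟨a, ha⟩
    simpa using congrFun ha 1
end

section
/- The singular locus Sing of the projective sextic curve F = 0 has exactly 2, 3, or 4 elements, and every point of Sing is a singularity of multiplicity exactly 2 (that is, at every point of Sing some second-order partial derivative of F does not vanish). -/
open MvPolynomial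

theorem s19_dehom_inj {k : Type*} [Field k] [Infinite k] (H : MvPolynomial (Fin 3) k)
    (hH : H.IsHomogeneous 6)
    (h0 : aeval ![(X 0 : MvPolynomial (Fin 2) k), X 1, 1] H = 0) : H = 0 := by
  have key : H * X 2 = 0 := by
    apply MvPolynomial.funext
    intro v
    simp only [map_mul, eval_X, map_zero]
    by_cases hv : v 2 = 0
    · simp [hv]
    · have h1 : eval ![v 0 / v 2, v 1 / v 2, 1] H = 0 := by
        have h2 := congrArg (eval ![v 0 / v 2, v 1 / v 2]) h0
        rw [map_zero, aeval_def, eval_eval₂] at h2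
        rw [← h2, ← MvPolynomial.eval₂_id]
        congr 1
        · ext; simp
        · funext i; fin_cases i <;> simp
      have h4 : eval v H = v 2 ^ 6 * eval ![v 0 / v 2, v 1 / v 2, 1] H := by
        rw [eval_eq', eval_eq', Finset.mul_sum]
        apply Finset.sum_congr rfl
        intro d hd
        have h5 := hH (mem_support_iff.mp hd)
        rw [Finsupp.weight_apply, Finsupp.sum_fintype _ _ (by simp)] at h5
        simp [Fin.sum_univ_three] at h5
        simp only [Fin.prod_univ_three, ← h5]
        simp only [pow_add, Matrix.cons_val_zero, Matrix.cons_val_one, Matrix.cons_val, div_pow, one_pow]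
        field_simp
      rw [h4, h1]; simp
  exact (mul_eq_zero.mp key).resolve_right (X_ne_zero 2)

theorem s19_quad {k : Type*} [Field k] [IsAlgClosed k] (a b c : k) (h : ¬(a = 0 ∧ b = 0 ∧ c = 0)) :
    ∃ a1 b1 a2 b2 : k, ¬ (a1 = 0 ∧ b1 = 0) ∧ ¬ (a2 = 0 ∧ b2 = 0) ∧
      ∀ x z : k, a * x ^ 2 + b * x * z + c * z ^ 2 = (a1 * x - b1 * z) * (a2 * x - b2 * z) := by
  by_cases ha : a = 0
  · refine ⟨0, -1, b, -c, by simp, by simp_all, fun x z => by rw [ha]; ring⟩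
  · obtain ⟨r, hr⟩ := IsAlgClosed.exists_root
      (Polynomial.C a * Polynomial.X ^ 2 + Polynomial.C b * Polynomial.X + Polynomial.C c)
      (by rw [Polynomial.degree_quadratic ha]; decide)
    simp at hr
    refine ⟨1, r, a, -(b + a * r), by simp, by simp [ha], fun x z => by linear_combination z ^ 2 * hr⟩

theorem s19_cubic {k : Type*} [Field k] [IsAlgClosed k] (a b c d : k)
    (h : ¬(a = 0 ∧ b = 0 ∧ c = 0 ∧ d = 0)) :
    ∃ a1 b1 a2 b2 a3 b3 : k, ¬ (a1 = 0 ∧ b1 = 0) ∧ ¬ (a2 = 0 ∧ b2 = 0) ∧ ¬ (a3 = 0 ∧ b3 = 0) ∧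
      ∀ x z : k, a * x ^ 3 + b * x ^ 2 * z + c * x * z ^ 2 + d * z ^ 3 =
        (a1 * x - b1 * z) * ((a2 * x - b2 * z) * (a3 * x - b3 * z)) := by
  by_cases ha : a = 0
  · obtain ⟨a2, b2, a3, b3, h2, h3, h4⟩ := s19_quad b c d (by tauto)
    refine ⟨0, -1, a2, b2, a3, b3, by simp, h2, h3, fun x z => ?_⟩
    rw [← h4, ha]; ring
  · obtain ⟨r, hr⟩ := IsAlgClosed.exists_root
      (Polynomial.C a * Polynomial.X ^ 3 + Polynomial.C b * Polynomial.X ^ 2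
        + Polynomial.C c * Polynomial.X + Polynomial.C d)
      (by rw [Polynomial.degree_cubic ha]; decide)
    simp at hr
    obtain ⟨a2, b2, a3, b3, h2, h3, h4⟩ := s19_quad a (b + a * r) (c + b * r + a * r ^ 2)
      (by tauto)
    refine ⟨1, r, a2, b2, a3, b3, by simp, h2, h3, fun x z => ?_⟩
    rw [← h4]; linear_combination z ^ 3 * hr

theorem s19_rep {k : Type*} [Field k] (P : Projectivization k (Fin 3 → k)) (v : Fin 3 → k)
    (hv : v ≠ 0) : P = Projectivization.mk k v hv ↔ ∃ t : k, t • v = P.rep := by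
  conv_lhs => rw [← P.mk_rep]
  rw [Projectivization.mk_eq_mk_iff']

theorem s19_rep_line {k : Type*} [Field k] (P : Projectivization k (Fin 3 → k)) (a b : k)
    (hab : ¬ (a = 0 ∧ b = 0)) (hv : ![b, 0, a] ≠ 0) :
    P = Projectivization.mk k ![b, 0, a] hv ↔ P.rep 1 = 0 ∧ a * P.rep 0 - b * P.rep 2 = 0 := by
  rw [s19_rep]
  constructor
  · rintro ⟨t, ht⟩
    rw [← ht]
    simp
    ring
  · rintro ⟨h1, h2⟩
    by_cases ha : a = 0
    · have hb : b ≠ 0 := by tauto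
      refine ⟨P.rep 0 / b, ?_⟩
      have : P.rep 2 = 0 := by simp_all
      funext i; fin_cases i <;> simp [*]
    · refine ⟨P.rep 2 / a, ?_⟩
      funext i; fin_cases i
      · simp; field_simp; linear_combination -h2
      · simp [*]
      · simp [*]

theorem s19_rep_e {k : Type*} [Field k] (P : Projectivization k (Fin 3 → k))
    (hv : (![0, 1, 0] : Fin 3 → k) ≠ 0) :
    P = Projectivization.mk k ![0, 1, 0] hv ↔ P.rep 0 = 0 ∧ P.rep 2 = 0 := by
  rw [s19_rep]
  constructor
  · rintro ⟨t, ht⟩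
    rw [← ht]
    simp
  · rintro ⟨h1, h2⟩
    refine ⟨P.rep 1, ?_⟩
    funext i; fin_cases i <;> simp [*]

/-- homogenized quartic -/
noncomputable def s19A {k : Type*} [Field k] (a b c d : k) : MvPolynomial (Fin 3) k :=
  (X 0 - C a * X 2) * (X 0 - C b * X 2) * (X 0 - C c * X 2) * (X 0 - C d * X 2)

/-- binary cubic in the first and third variable -/
noncomputable def s19D {k : Type*} [Field k] (a b c d : k) : MvPolynomial (Fin 3) k :=
  C a * X 0 ^ 3 + C b * X 0 ^ 2 * X 2 + C c * X 0 * X 2 ^ 2 + C d * X 2 ^ 3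

theorem s19A_hom {k : Type*} [Field k] (a b c d : k) : (s19A a b c d).IsHomogeneous 4 := by
  have h : ∀ a : k, (X 0 - C a * X 2 : MvPolynomial (Fin 3) k).IsHomogeneous 1 := fun a =>
    (isHomogeneous_X k 0).sub (by simpa using (isHomogeneous_C (Fin 3) a).mul (isHomogeneous_X k 2))
  exact (((h a).mul (h b)).mul (h c)).mul (h d)

theorem s19D_hom {k : Type*} [Field k] (a b c d : k) : (s19D a b c d).IsHomogeneous 3 := by
  have h : ∀ (a : k) (i j : ℕ), i + j = 3 →
      (C a * X 0 ^ i * X 2 ^ j : MvPolynomial (Fin 3) k).IsHomogeneous 3 := by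
    intro a i j hij
    have := ((isHomogeneous_C (Fin 3) a).mul ((isHomogeneous_X k 0).pow i)).mul
      ((isHomogeneous_X k 2).pow j)
    convert this using 1
    omega
  have e : s19D a b c d = C a * X 0 ^ 3 * X 2 ^ 0 + C b * X 0 ^ 2 * X 2 ^ 1
    + C c * X 0 ^ 1 * X 2 ^ 2 + C d * X 0 ^ 0 * X 2 ^ 3 := by
    simp [s19D]
  rw [e]
  exact (((h a 3 0 rfl).add (h b 2 1 rfl)).add (h c 1 2 rfl)).add (h d 0 3 rfl)

theorem s19G_hom {k : Type*} [Field k] (A B D : MvPolynomial (Fin 3) k) (hA : A.IsHomogeneous 4)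
    (hB : B.IsHomogeneous 4) (hD : D.IsHomogeneous 3) :
    (X 1 ^ 4 * X 2 ^ 2 - C 2 * (A + B) * X 1 ^ 2 + D ^ 2).IsHomogeneous 6 := by
  have h1 := ((isHomogeneous_X k (1 : Fin 3)).pow 4).mul ((isHomogeneous_X k (2 : Fin 3)).pow 2)
  have h2 := ((isHomogeneous_C (Fin 3) (2 : k)).mul (hA.add hB)).mul
    ((isHomogeneous_X k (1 : Fin 3)).pow 2)
  have h3 := hD.pow 2
  exact (h1.sub h2).add h3

/-- arithmetic heart: A, B, their x-derivatives -/
theorem s19_arith {k : Type*} [Field k] (x z : k)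
    (a1 a2 a3 a4 : k) (hz : z ≠ 0)
    (h12 : a1 ≠ a2) (h13 : a1 ≠ a3) (h14 : a1 ≠ a4) (h23 : a2 ≠ a3) (h24 : a2 ≠ a4) (h34 : a3 ≠ a4)
    (hA : (x - a1 * z) * (x - a2 * z) * (x - a3 * z) * (x - a4 * z) = 0)
    (hA' : (x - a2 * z) * (x - a3 * z) * (x - a4 * z) + (x - a1 * z) * (x - a3 * z) * (x - a4 * z)
      + (x - a1 * z) * (x - a2 * z) * (x - a4 * z) + (x - a1 * z) * (x - a2 * z) * (x - a3 * z) = 0) :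
    False := by
  have key : ∀ s t : k, s ≠ t → x - s * z = 0 → x - t * z ≠ 0 := by
    intro s t hst hs ht
    have : (s - t) * z = 0 := by linear_combination ht - hs
    exact (mul_ne_zero (sub_ne_zero.mpr hst) hz) this
  rcases mul_eq_zero.mp hA with hA | h
  · rcases mul_eq_zero.mp hA with hA | h
    · rcases mul_eq_zero.mp hA with h | h
      · have e2 := key _ _ h12 h
        have e3 := key _ _ h13 h
        have e4 := key _ _ h14 h
        simp [h, e2, e3, e4] at hA'
      · have e2 := key _ _ h12.symm h
        have e3 := key _ _ h23 h
        have e4 := key _ _ h24 h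
        simp [h, e2, e3, e4] at hA'
    · have e2 := key _ _ h13.symm h
      have e3 := key _ _ h23.symm h
      have e4 := key _ _ h34 h
      simp [h, e2, e3, e4] at hA'
  · have e2 := key _ _ h14.symm h
    have e3 := key _ _ h24.symm h
    have e4 := key _ _ h34.symm h
    simp [h, e2, e3, e4] at hA'

theorem s19_common {k : Type*} [Field k] (x z : k) (a1 a2 a3 a4 b1 b2 b3 b4 : k)
    (hne : ∀ a ∈ [a1, a2, a3, a4], ∀ b ∈ [b1, b2, b3, b4], a ≠ b)
    (hA : (x - a1 * z) * (x - a2 * z) * (x - a3 * z) * (x - a4 * z) = 0)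
    (hB : (x - b1 * z) * (x - b2 * z) * (x - b3 * z) * (x - b4 * z) = 0) :
    x = 0 ∧ z = 0 := by
  have hA' : ∃ a ∈ [a1, a2, a3, a4], x = a * z := by
    simpa [sub_eq_zero, or_assoc] using hA
  have hB' : ∃ b ∈ [b1, b2, b3, b4], x = b * z := by
    simpa [sub_eq_zero, or_assoc] using hB
  obtain ⟨a, ha, h1⟩ := hA'
  obtain ⟨b, hb, h2⟩ := hB'
  have : (a - b) * z = 0 := by linear_combination h2 - h1
  have hz := (mul_eq_zero.mp this).resolve_left (sub_ne_zero.mpr (hne a ha b hb))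
  exact ⟨by rw [h1, hz, mul_zero], hz⟩

set_option maxHeartbeats 2000000 in
/-- The singular locus of the projective sextic F = 0 has exactly 2, 3 or 4
elements, and every singular point has multiplicity exactly 2 (some
second-order partial derivative of F does not vanish there). -/
theorem stmt_19
    {k : Type*} [Field k] [IsAlgClosed k]
    (p : ℕ) [CharP k p] (hp : p = 0 ∨ 5 ≤ p)
    (α1 α2 α3 α4 β1 β2 β3 β4 : k)
    (hdist : ([α1, α2, α3, α4, β1, β2, β3, β4] : List k).Pairwise (· ≠ ·))
    (φ1 φ2 f : MvPolynomial (Fin 2) k)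
    (hφ1 : φ1 = (X 0 - C α1) * (X 0 - C α2) * (X 0 - C α3) * (X 0 - C α4))
    (hφ2 : φ2 = (X 0 - C β1) * (X 0 - C β2) * (X 0 - C β3) * (X 0 - C β4))
    (hf : f = X 1 ^ 4 - C 2 * (φ1 + φ2) * X 1 ^ 2 + (φ1 - φ2) ^ 2)
    (F : MvPolynomial (Fin 3) k)
    (hFhom : F.IsHomogeneous 6)
    (hFf : aeval ![(X 0 : MvPolynomial (Fin 2) k), X 1, 1] F = f)
    (Sing : Set (Projectivization k (Fin 3 → k)))
    (hSing : ∀ P : Projectivization k (Fin 3 → k),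
      P ∈ Sing ↔ (eval P.rep F = 0 ∧
        eval P.rep (pderiv 0 F) = 0 ∧
        eval P.rep (pderiv 1 F) = 0 ∧
        eval P.rep (pderiv 2 F) = 0)) :
    (Sing.ncard = 2 ∨ Sing.ncard = 3 ∨ Sing.ncard = 4)
    ∧ ∀ P ∈ Sing, ∃ i j : Fin 3, eval P.rep (pderiv i (pderiv j F)) ≠ 0 := by
  have h2 : (2 : k) ≠ 0 := by
    intro h
    have := (CharP.cast_eq_zero_iff k p 2).mp (by exact_mod_cast h)
    rcases hp with rfl | hp
    · simp at this
    · have := Nat.le_of_dvd (by norm_num) this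
      omega
  have h4 : (4 : k) ≠ 0 := by
    have : (4 : k) = 2 * 2 := by norm_num
    rw [this]; exact mul_ne_zero h2 h2
  -- coefficients of φ1 - φ2
  obtain ⟨c3, hc3⟩ : ∃ c : k, c = (β1 + β2 + β3 + β4) - (α1 + α2 + α3 + α4) := ⟨_, rfl⟩
  obtain ⟨c2, hc2⟩ : ∃ c : k, c = (α1 * α2 + α1 * α3 + α1 * α4 + α2 * α3 + α2 * α4 + α3 * α4)
    - (β1 * β2 + β1 * β3 + β1 * β4 + β2 * β3 + β2 * β4 + β3 * β4) := ⟨_, rfl⟩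
  obtain ⟨c1, hc1⟩ : ∃ c : k, c = (β1 * β2 * β3 + β1 * β2 * β4 + β1 * β3 * β4 + β2 * β3 * β4)
    - (α1 * α2 * α3 + α1 * α2 * α4 + α1 * α3 * α4 + α2 * α3 * α4) := ⟨_, rfl⟩
  obtain ⟨c0, hc0⟩ : ∃ c : k, c = α1 * α2 * α3 * α4 - β1 * β2 * β3 * β4 := ⟨_, rfl⟩
  have hFG : F = X 1 ^ 4 * X 2 ^ 2 - C 2 * (s19A α1 α2 α3 α4 + s19A β1 β2 β3 β4) * X 1 ^ 2
      + s19D c3 c2 c1 c0 ^ 2 := by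
    rw [← sub_eq_zero]
    apply s19_dehom_inj _ (hFhom.sub (s19G_hom _ _ _ (s19A_hom _ _ _ _) (s19A_hom _ _ _ _)
      (s19D_hom _ _ _ _)))
    rw [map_sub, hFf, hf, hφ1, hφ2, hc3, hc2, hc1, hc0]
    simp [s19A, s19D, algebraMap_eq]
    ring
  clear hFhom hFf hf hφ1 hφ2
  have hneab : ∀ a ∈ [α1, α2, α3, α4], ∀ b ∈ [β1, β2, β3, β4], a ≠ b := by
    simp at hdist ⊢
    tauto
  have hAa : α1 ≠ α2 ∧ α1 ≠ α3 ∧ α1 ≠ α4 ∧ α2 ≠ α3 ∧ α2 ≠ α4 ∧ α3 ≠ α4 := by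
    simp at hdist ⊢
    tauto
  have hBb : β1 ≠ β2 ∧ β1 ≠ β3 ∧ β1 ≠ β4 ∧ β2 ≠ β3 ∧ β2 ≠ β4 ∧ β3 ≠ β4 := by
    simp at hdist ⊢
    tauto
  clear hdist
  have hzD : ∀ x z : k, z * (c3 * x ^ 3 + c2 * x ^ 2 * z + c1 * x * z ^ 2 + c0 * z ^ 3)
      = (x - α1 * z) * (x - α2 * z) * (x - α3 * z) * (x - α4 * z)
        - (x - β1 * z) * (x - β2 * z) * (x - β3 * z) * (x - β4 * z) := by
    intro x z
    rw [hc3, hc2, hc1, hc0]; ring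
  have hcne : ¬(c3 = 0 ∧ c2 = 0 ∧ c1 = 0 ∧ c0 = 0) := by
    rintro ⟨e3, e2, e1, e0⟩
    have h := hzD α1 1
    have := s19_common α1 1 α1 α2 α3 α4 β1 β2 β3 β4 hneab (by ring)
      (by rw [e3, e2, e1, e0] at h; linear_combination h)
    exact one_ne_zero this.2
  have hzDx : ∀ x z : k, z * (3 * c3 * x ^ 2 + 2 * c2 * x * z + c1 * z ^ 2)
      = ((x - α2 * z) * (x - α3 * z) * (x - α4 * z) + (x - α1 * z) * (x - α3 * z) * (x - α4 * z)
      + (x - α1 * z) * (x - α2 * z) * (x - α4 * z) + (x - α1 * z) * (x - α2 * z) * (x - α3 * z))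
      - ((x - β2 * z) * (x - β3 * z) * (x - β4 * z) + (x - β1 * z) * (x - β3 * z) * (x - β4 * z)
      + (x - β1 * z) * (x - β2 * z) * (x - β4 * z) + (x - β1 * z) * (x - β2 * z) * (x - β3 * z)) := by
    intro x z
    rw [hc3, hc2, hc1]; ring
  clear hc3 hc2 hc1 hc0
  have d2 : ∀ i : Fin 3, pderiv i (2 : MvPolynomial (Fin 3) k) = 0 := fun i =>
    (pderiv i).map_natCast 2
  have d3 : ∀ i : Fin 3, pderiv i (3 : MvPolynomial (Fin 3) k) = 0 := fun i =>
    (pderiv i).map_natCast 3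
  have d4 : ∀ i : Fin 3, pderiv i (4 : MvPolynomial (Fin 3) k) = 0 := fun i =>
    (pderiv i).map_natCast 4
  have E : ∀ v : Fin 3 → k, eval v F = v 1 ^ 4 * v 2 ^ 2 - 2 *
      ((v 0 - α1 * v 2) * (v 0 - α2 * v 2) * (v 0 - α3 * v 2) * (v 0 - α4 * v 2)
       + (v 0 - β1 * v 2) * (v 0 - β2 * v 2) * (v 0 - β3 * v 2) * (v 0 - β4 * v 2)) * v 1 ^ 2
      + (c3 * v 0 ^ 3 + c2 * v 0 ^ 2 * v 2 + c1 * v 0 * v 2 ^ 2 + c0 * v 2 ^ 3) ^ 2 := by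
    intro v
    rw [hFG]; simp [s19A, s19D]
  have E1 : ∀ v : Fin 3 → k, eval v (pderiv 1 F) = 4 * v 1 ^ 3 * v 2 ^ 2 - 4 *
      ((v 0 - α1 * v 2) * (v 0 - α2 * v 2) * (v 0 - α3 * v 2) * (v 0 - α4 * v 2)
       + (v 0 - β1 * v 2) * (v 0 - β2 * v 2) * (v 0 - β3 * v 2) * (v 0 - β4 * v 2)) * v 1 := by
    intro v
    rw [hFG]; simp [s19A, s19D, pderiv_X, d2, d3, d4]; ring
  have E11 : ∀ v : Fin 3 → k, eval v (pderiv 1 (pderiv 1 F)) = 12 * v 1 ^ 2 * v 2 ^ 2 - 4 *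
      ((v 0 - α1 * v 2) * (v 0 - α2 * v 2) * (v 0 - α3 * v 2) * (v 0 - α4 * v 2)
       + (v 0 - β1 * v 2) * (v 0 - β2 * v 2) * (v 0 - β3 * v 2) * (v 0 - β4 * v 2)) := by
    intro v
    rw [hFG]; simp [s19A, s19D, pderiv_X, d2, d3, d4]; ring
  have E0 : ∀ v : Fin 3 → k, eval v (pderiv 0 F) = - 2 *
      ((((v 0 - α2 * v 2) * (v 0 - α3 * v 2) * (v 0 - α4 * v 2)
      + (v 0 - α1 * v 2) * (v 0 - α3 * v 2) * (v 0 - α4 * v 2)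
      + (v 0 - α1 * v 2) * (v 0 - α2 * v 2) * (v 0 - α4 * v 2)
      + (v 0 - α1 * v 2) * (v 0 - α2 * v 2) * (v 0 - α3 * v 2)))
      + ((v 0 - β2 * v 2) * (v 0 - β3 * v 2) * (v 0 - β4 * v 2)
      + (v 0 - β1 * v 2) * (v 0 - β3 * v 2) * (v 0 - β4 * v 2)
      + (v 0 - β1 * v 2) * (v 0 - β2 * v 2) * (v 0 - β4 * v 2)
      + (v 0 - β1 * v 2) * (v 0 - β2 * v 2) * (v 0 - β3 * v 2))) * v 1 ^ 2
      + 2 * (c3 * v 0 ^ 3 + c2 * v 0 ^ 2 * v 2 + c1 * v 0 * v 2 ^ 2 + c0 * v 2 ^ 3)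
        * (3 * c3 * v 0 ^ 2 + 2 * c2 * v 0 * v 2 + c1 * v 2 ^ 2) := by
    intro v
    rw [hFG]; simp [s19A, s19D, pderiv_X, d2, d3, d4]; ring
  have E2a : ∀ v : Fin 3 → k, v 0 = 0 → v 2 = 0 → eval v (pderiv 2 F) = 0 := by
    intro v hx hz
    rw [hFG]; simp [s19A, s19D, pderiv_X, d2, d3, d4, hx, hz]
  have E2b : ∀ v : Fin 3 → k, v 1 = 0 →
      c3 * v 0 ^ 3 + c2 * v 0 ^ 2 * v 2 + c1 * v 0 * v 2 ^ 2 + c0 * v 2 ^ 3 = 0 →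
      eval v (pderiv 2 F) = 0 := by
    intro v hx hz
    rw [hFG]; simp [s19A, s19D, hx, hz]
  have E22 : ∀ v : Fin 3 → k, v 0 = 0 → v 2 = 0 →
      eval v (pderiv 2 (pderiv 2 F)) = 2 * v 1 ^ 4 := by
    intro v hx hz
    rw [hFG]; simp [s19A, s19D, pderiv_X, d2, d3, d4, hx, hz]; try ring
  clear hFG
  -- characterisation
  have hchar : ∀ v : Fin 3 → k, (eval v F = 0 ∧ eval v (pderiv 0 F) = 0 ∧
        eval v (pderiv 1 F) = 0 ∧ eval v (pderiv 2 F) = 0) ↔ ((v 0 = 0 ∧ v 2 = 0) ∨ (v 1 = 0 ∧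
        c3 * v 0 ^ 3 + c2 * v 0 ^ 2 * v 2 + c1 * v 0 * v 2 ^ 2 + c0 * v 2 ^ 3 = 0)) := by
    intro v
    constructor
    · rintro ⟨k0, kx, ky, -⟩
      rw [E] at k0
      rw [E0] at kx
      rw [E1] at ky
      have gzD := hzD (v 0) (v 2)
      have gzDx := hzDx (v 0) (v 2)
      by_cases hy : v 1 = 0
      · right
        refine ⟨hy, ?_⟩
        rw [hy] at k0
        exact pow_eq_zero_iff (two_ne_zero) |>.mp (by linear_combination k0)
      · by_cases hz : v 2 = 0
        · left
          refine ⟨?_, hz⟩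
          rw [hz] at ky
          have : (2 * 4) * v 1 * v 0 ^ 4 = 0 := by linear_combination -ky
          simpa [h2, h4, hy] using this
        · exfalso
          have gA := s19_arith (v 0) (v 2) α1 α2 α3 α4 hz hAa.1 hAa.2.1 hAa.2.2.1 hAa.2.2.2.1
            hAa.2.2.2.2.1 hAa.2.2.2.2.2
          have gB := s19_arith (v 0) (v 2) β1 β2 β3 β4 hz hBb.1 hBb.2.1 hBb.2.2.1 hBb.2.2.2.1
            hBb.2.2.2.2.1 hBb.2.2.2.2.2
          have gC := s19_common (v 0) (v 2) α1 α2 α3 α4 β1 β2 β3 β4 hneab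
          generalize (v 0 - α1 * v 2) * (v 0 - α2 * v 2) * (v 0 - α3 * v 2) * (v 0 - α4 * v 2) = A
            at *
          generalize (v 0 - β1 * v 2) * (v 0 - β2 * v 2) * (v 0 - β3 * v 2) * (v 0 - β4 * v 2) = B
            at *
          generalize (v 0 - α2 * v 2) * (v 0 - α3 * v 2) * (v 0 - α4 * v 2)
            + (v 0 - α1 * v 2) * (v 0 - α3 * v 2) * (v 0 - α4 * v 2)
            + (v 0 - α1 * v 2) * (v 0 - α2 * v 2) * (v 0 - α4 * v 2)
            + (v 0 - α1 * v 2) * (v 0 - α2 * v 2) * (v 0 - α3 * v 2) = A' at *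
          generalize (v 0 - β2 * v 2) * (v 0 - β3 * v 2) * (v 0 - β4 * v 2)
            + (v 0 - β1 * v 2) * (v 0 - β3 * v 2) * (v 0 - β4 * v 2)
            + (v 0 - β1 * v 2) * (v 0 - β2 * v 2) * (v 0 - β4 * v 2)
            + (v 0 - β1 * v 2) * (v 0 - β2 * v 2) * (v 0 - β3 * v 2) = B' at *
          generalize c3 * v 0 ^ 3 + c2 * v 0 ^ 2 * v 2 + c1 * v 0 * v 2 ^ 2 + c0 * v 2 ^ 3 = D at *
          generalize 3 * c3 * v 0 ^ 2 + 2 * c2 * v 0 * v 2 + c1 * v 2 ^ 2 = D' at *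
          have hS : v 1 ^ 2 * v 2 ^ 2 = A + B := by
            have : 4 * v 1 * (v 1 ^ 2 * v 2 ^ 2 - (A + B)) = 0 := by linear_combination ky
            have := (mul_eq_zero.mp this).resolve_left (mul_ne_zero h4 hy)
            linear_combination this
          have hAB : 4 * (A * B) = 0 := by
            linear_combination -(v 2) ^ 2 * k0 + (v 2 * D + A - B) * gzD
              + (v 1 ^ 2 * v 2 ^ 2 - (A + B)) * hS
          have hx : 4 * (A * B' + B * A') = 0 := by
            linear_combination -(v 2) ^ 2 * kx - 2 * (A' + B') * hS
              + 2 * (v 2 * D') * gzD + 2 * (A - B) * gzDx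
          have hAB' := (mul_eq_zero.mp hAB).resolve_left h4
          have hx' := (mul_eq_zero.mp hx).resolve_left h4
          rcases mul_eq_zero.mp hAB' with h | h
          · rw [h, zero_mul, zero_add] at hx'
            rcases mul_eq_zero.mp hx' with h' | h'
            · exact hz (gC h h').2
            · exact gA h h'
          · rw [h, zero_mul, add_zero] at hx'
            rcases mul_eq_zero.mp hx' with h' | h'
            · exact hz (gC h' h).2
            · exact gB h h'
    · rintro (⟨hx, hz⟩ | ⟨hy, hD⟩)
      · refine ⟨?_, ?_, ?_, E2a v hx hz⟩
        · rw [E, hx, hz]; ring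
        · rw [E0, hx, hz]; ring
        · rw [E1, hx, hz]; ring
      · refine ⟨?_, ?_, ?_, E2b v hy hD⟩
        · rw [E, hy, hD]; ring
        · rw [E0, hy, hD]; ring
        · rw [E1, hy]; ring
  have hS : ∀ P, P ∈ Sing ↔ ((P.rep 0 = 0 ∧ P.rep 2 = 0) ∨ (P.rep 1 = 0 ∧
        c3 * P.rep 0 ^ 3 + c2 * P.rep 0 ^ 2 * P.rep 2 + c1 * P.rep 0 * P.rep 2 ^ 2
          + c0 * P.rep 2 ^ 3 = 0)) := fun P => (hSing P).trans (hchar _)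
  have hnz : ∀ P : Projectivization k (Fin 3 → k),
      ¬ (P.rep 0 = 0 ∧ P.rep 1 = 0 ∧ P.rep 2 = 0) := by
    rintro P ⟨e0, e1, e2⟩
    apply P.rep_nonzero
    funext i; fin_cases i <;> simp [*]
  constructor
  · obtain ⟨a1, b1, a2, b2, a3, b3, n1, n2, n3, hfac⟩ := s19_cubic c3 c2 c1 c0 hcne
    have hv : ∀ a b : k, ¬ (a = 0 ∧ b = 0) → ![b, 0, a] ≠ 0 := by
      intro a b hab h
      exact hab ⟨by simpa using congrFun h 2, by simpa using congrFun h 0⟩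
    have he : (![0, 1, 0] : Fin 3 → k) ≠ 0 := fun h => by simpa using congrFun h 1
    have hSe : Sing = {Projectivization.mk k _ he, Projectivization.mk k _ (hv _ _ n1),
        Projectivization.mk k _ (hv _ _ n2), Projectivization.mk k _ (hv _ _ n3)} := by
      ext P
      rw [hS]
      simp only [Set.mem_insert_iff, Set.mem_singleton_iff]
      rw [s19_rep_e, s19_rep_line P _ _ n1, s19_rep_line P _ _ n2, s19_rep_line P _ _ n3, hfac,
        mul_eq_zero, mul_eq_zero, and_or_left, and_or_left]
    have hle : Sing.ncard ≤ 4 := by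
      rw [hSe]
      refine (Set.ncard_insert_le _ _).trans ?_
      refine Nat.succ_le_succ ((Set.ncard_insert_le _ _).trans ?_)
      refine Nat.succ_le_succ ((Set.ncard_insert_le _ _).trans ?_)
      rw [Set.ncard_singleton]
    have hfin : Sing.Finite := by rw [hSe]; exact Set.toFinite _
    have hlt : 1 < Sing.ncard := by
      rw [Set.one_lt_ncard_iff_nontrivial_and_finite]
      refine ⟨⟨Projectivization.mk k _ he, by rw [hSe]; simp,
        Projectivization.mk k _ (hv _ _ n1), by rw [hSe]; simp, ?_⟩, hfin⟩
      intro h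
      have g1 := (s19_rep_e _ he).mp rfl
      have g2 := (s19_rep_line _ _ _ n1 (hv _ _ n1)).mp h
      exact hnz _ ⟨g1.1, g2.1, g1.2⟩
    omega
  · intro P hP
    rcases (hS P).mp hP with ⟨hx, hz⟩ | ⟨hy, hD⟩
    · refine ⟨2, 2, ?_⟩
      rw [E22 _ hx hz]
      exact mul_ne_zero h2 (pow_ne_zero _ fun hy => hnz P ⟨hx, hy, hz⟩)
    · refine ⟨1, 1, ?_⟩
      rw [E11, hy]
      intro h
      have g := hzD (P.rep 0) (P.rep 2)
      rw [hD, mul_zero] at g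
      have gC := s19_common (P.rep 0) (P.rep 2) α1 α2 α3 α4 β1 β2 β3 β4 hneab
      generalize (P.rep 0 - α1 * P.rep 2) * (P.rep 0 - α2 * P.rep 2) * (P.rep 0 - α3 * P.rep 2)
        * (P.rep 0 - α4 * P.rep 2) = A at *
      generalize (P.rep 0 - β1 * P.rep 2) * (P.rep 0 - β2 * P.rep 2) * (P.rep 0 - β3 * P.rep 2)
        * (P.rep 0 - β4 * P.rep 2) = B at *
      have hA : (4 * 2) * A = 0 := by linear_combination -h - 4 * g
      have hA' := (mul_eq_zero.mp hA).resolve_left (mul_ne_zero h4 h2)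
      have := gC hA' (by linear_combination g + hA')
      exact hnz P ⟨this.1, hy, this.2⟩
end
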